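/- Let N ≥ 3 be odd. Let u₀ ∈ C_c^∞(ℝ^N) with supp u₀ ⊆ {|x| ≤ 1}, and let u : ℝ × ℝ^N → ℝ be a smooth solution of the linear wave equation ∂_t²u = Δ_x u with u(0,·) = u₀ and ∂_t u(0,·) = 0. Define Ext(t) = (1/2)∫_{|x| ≥ |t|} (|∇_x u(t,x)|² + (∂_t u(t,x))²) dx. Then Ext(t) → (1/4)∫_{ℝ^N}|∇u₀|² dx as t → +∞ and also as t → −∞. -/

import Mathlib

open MeasureTheory Metric Filter Set

noncomputable section

/-- The ground state `W(x) = (1 + |x|²/(N(N-2)))^(-(N-2)/2)`. -/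
def W (N : ℕ) (x : EuclideanSpace ℝ (Fin N)) : ℝ :=
  (1 + ‖x‖ ^ 2 / ((N : ℝ) * ((N : ℝ) - 2))) ^ (-(((N : ℝ) - 2) / 2))

/-- The energy `E(v₀,v₁)`. -/
def energy (N : ℕ) (v₀ v₁ : EuclideanSpace ℝ (Fin N) → ℝ) : ℝ :=
  (1 / 2) * (∫ x, v₁ x ^ 2)
    + (1 / 2) * (∫ x, ‖gradient v₀ x‖ ^ 2)
    - ((N : ℝ) - 2) / (2 * (N : ℝ)) * (∫ x, |v₀ x| ^ (2 * (N : ℝ) / ((N : ℝ) - 2)))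

/-- The first coordinate of a point of `ℝ^N`. -/
def firstCoord {N : ℕ} (x : EuclideanSpace ℝ (Fin N)) : ℝ :=
  if h : 0 < N then x ⟨0, h⟩ else 0

/-- The Lorentz-transformed ground state `W_ℓ(t,x)`; the sum `x₂² + ⋯ + x_N²` is written
as `‖x‖² - x₁²`. -/
def Wl (N : ℕ) (ℓ : ℝ) (t : ℝ) (x : EuclideanSpace ℝ (Fin N)) : ℝ :=
  (1 + (firstCoord x - t * ℓ) ^ 2 / ((N : ℝ) * ((N : ℝ) - 2) * (1 - ℓ ^ 2))
     + (‖x‖ ^ 2 - firstCoord x ^ 2) / ((N : ℝ) * ((N : ℝ) - 2))) ^ (-(((N : ℝ) - 2) / 2))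

/-- The time derivative `∂ₜ W_ℓ(t,x)`. -/
def dtWl (N : ℕ) (ℓ : ℝ) (t : ℝ) (x : EuclideanSpace ℝ (Fin N)) : ℝ :=
  deriv (fun s => Wl N ℓ s x) t

/-- The second partial derivative `∂²f/∂xⱼ²` at `x`. -/
def d2 {N : ℕ} (f : EuclideanSpace ℝ (Fin N) → ℝ) (j : Fin N)
    (x : EuclideanSpace ℝ (Fin N)) : ℝ :=
  fderiv ℝ (fun y => fderiv ℝ f y (EuclideanSpace.single j 1)) x (EuclideanSpace.single j 1)

/-!
By the Radon inversion formula in odd dimension `2 * k + 1`, and uniqueness from the energy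
inequality, the wave with initial data `(u, 0)` is a superposition of plane waves whose density is
the `2 * k`-th derivative of the Radon transform of `u`. The `(k + 1)`-st derivative is, up to a
constant, its radiation profile: pair the space-time gradient of the wave at time `t` with that of
the outgoing radial wave with this profile. Each plane wave meets the sphere of radius `t` near one
point, and after a parabolic zoom there the pairing converges to `∫ ‖∇u‖²`. Both gradients have
squared `L²` norm at most `∫ ‖∇u‖²`, so this is the equality case of the Cauchy-Schwarz inequality
and their difference tends to zero in `L²`. The squared profile is invariant under
`(ω, s) ↦ (-ω, -s)`, hence half of the energy of the radial wave lies outside the light cone. The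
limit at `-∞` follows by time reversal.
-/

open Module InnerProductSpace
open scoped Topology RealInnerProductSpace Laplacian FourierTransform SchwartzMap

section Calculus

theorem hasFDerivAt_setIntegral_of_continuous {X H : Type*} [TopologicalSpace X]
    [MeasurableSpace X] [BorelSpace X] [SecondCountableTopology X] [T2Space X]
    {μ : Measure X} [IsFiniteMeasureOnCompacts μ]
    [NormedAddCommGroup H] [NormedSpace ℝ H] [FiniteDimensional ℝ H]
    {f : H → X → ℝ} {f' : H → X → H →L[ℝ] ℝ} {K : Set X} (hK : IsCompact K)
    (hf : Continuous f.uncurry) (hf' : Continuous f'.uncurry)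
    (hderiv : ∀ h x, HasFDerivAt (fun h ↦ f h x) (f' h x) h) (h₀ : H) :
    HasFDerivAt (fun h ↦ ∫ x in K, f h x ∂μ) (∫ x in K, f' h₀ x ∂μ) h₀ := by
  have := FiniteDimensional.proper_real H
  have : IsFiniteMeasure (μ.restrict K) := ⟨by simpa using hK.measure_lt_top⟩
  obtain ⟨s, hs, hs_nhds⟩ := exists_compact_mem_nhds h₀
  obtain ⟨C, hC⟩ := ((hs.prod hK).image hf'.norm).bddAbove
  have hf_x (h : H) : Continuous (f h) := by fun_prop
  have hf'_x (h : H) : Continuous (f' h) := by fun_prop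
  refine hasFDerivAt_integral_of_dominated_of_fderiv_le (bound := fun _ ↦ C) hs_nhds
    (.of_forall fun h ↦ (hf_x h).continuousOn.aestronglyMeasurable hK.measurableSet)
    ((hf_x h₀).continuousOn.integrableOn_compact hK)
    ((hf'_x h₀).continuousOn.aestronglyMeasurable hK.measurableSet) ?_
    (integrable_const _) (.of_forall fun x h _ ↦ hderiv h x)
  filter_upwards [ae_restrict_mem hK.measurableSet] with x hx h hh
  exact hC ⟨(h, x), ⟨hh, hx⟩, rfl⟩

variable {E : Type*} [NormedAddCommGroup E] [NormedSpace ℝ E]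

theorem contDiff_fderiv_apply {f : E → ℝ} (hf : ContDiff ℝ 2 f) (v : E) :
    ContDiff ℝ 1 fun x ↦ fderiv ℝ f x v :=
  (hf.fderiv_right (by norm_num)).clm_apply contDiff_const

theorem fderiv_fderiv_apply_comm {f : E → ℝ} (hf : ContDiff ℝ 2 f) (x v w : E) :
    fderiv ℝ (fun y ↦ fderiv ℝ f y v) x w = fderiv ℝ (fun y ↦ fderiv ℝ f y w) x v := by
  have hf' : DifferentiableAt ℝ (fderiv ℝ f) x :=
    (hf.fderiv_right (m := 1) (by norm_num)).differentiable one_ne_zero x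
  have hsymm : IsSymmSndFDerivAt ℝ f x := hf.contDiffAt.isSymmSndFDerivAt (by simp)
  simpa [fderiv_clm_apply hf' (differentiableAt_const _)] using hsymm w v

theorem fderiv_comp_prodMk_right {f : ℝ × E → ℝ} (hf : ContDiff ℝ 1 f) (t : ℝ) (x v : E) :
    fderiv ℝ (fun y ↦ f (t, y)) x v = fderiv ℝ f (t, x) (0, v) := by
  have := (hf.differentiable one_ne_zero (t, x)).hasFDerivAt.comp x (hasFDerivAt_prodMk_right t x)
  exact DFunLike.congr_fun this.fderiv v

theorem deriv_comp_prodMk_left {f : ℝ × E → ℝ} (hf : ContDiff ℝ 1 f) (t : ℝ) (x : E) :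
    deriv (fun s ↦ f (s, x)) t = fderiv ℝ f (t, x) (1, 0) := by
  have := (hf.differentiable one_ne_zero (t, x)).hasFDerivAt.comp t
    (hasFDerivAt_prodMk_left (𝕜 := ℝ) t x)
  exact this.hasDerivAt.deriv

theorem integral_fderiv_eq_zero [FiniteDimensional ℝ E] [MeasurableSpace E] [BorelSpace E]
    {μ : Measure E} [μ.IsAddHaarMeasure] {f : E → ℝ} (hf : ContDiff ℝ 1 f)
    (hfc : HasCompactSupport f) (v : E) :
    ∫ x, fderiv ℝ f x v ∂μ = 0 := by
  have hf'_cont : Continuous fun x ↦ fderiv ℝ f x v :=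
    (hf.continuous_fderiv one_ne_zero).clm_apply continuous_const
  have hf'_int : Integrable (fun x ↦ fderiv ℝ f x v) μ :=
    hf'_cont.integrable_of_hasCompactSupport (hfc.fderiv_apply (𝕜 := ℝ) v)
  simpa using integral_mul_fderiv_eq_neg_fderiv_mul_of_integrable (μ := μ) (𝕜 := ℝ)
    (f := fun _ ↦ (1 : ℝ)) (g := f) (v := v) (by simp) (by simpa using hf'_int)
    (by simpa using hf.continuous.integrable_of_hasCompactSupport hfc)
    (fun x _ ↦ by fun_prop) (fun x _ ↦ hf.differentiable one_ne_zero x)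

theorem integral_fderiv_prod_eq_zero [FiniteDimensional ℝ E] [MeasurableSpace E] [BorelSpace E]
    {μ : Measure E} [μ.IsAddHaarMeasure] {f : ℝ × E → ℝ} {t : ℝ} (hf : ContDiff ℝ 1 f)
    (hfc : HasCompactSupport fun x ↦ f (t, x)) (v : E) :
    ∫ x, fderiv ℝ f (t, x) (0, v) ∂μ = 0 := by
  simp_rw [← fderiv_comp_prodMk_right hf]
  exact integral_fderiv_eq_zero (hf.comp (contDiff_prodMk_right t)) hfc v

end Calculus

section IteratedDeriv

variable {f g : ℝ → ℝ}

theorem hasDerivAt_iteratedDeriv (hg : ContDiff ℝ (⊤ : ℕ∞) g) (n : ℕ) (s : ℝ) :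
    HasDerivAt (iteratedDeriv n g) (iteratedDeriv (n + 1) g s) s := by
  rw [iteratedDeriv_succ]
  exact (hg.differentiable_iteratedDeriv n (by exact_mod_cast WithTop.coe_lt_top n) s).hasDerivAt

theorem hasCompactSupport_iteratedDeriv (hgc : HasCompactSupport g) (n : ℕ) :
    HasCompactSupport (iteratedDeriv n g) := by
  induction n with
  | zero => simpa
  | succ n ih => simpa only [iteratedDeriv_succ] using ih.deriv

theorem integral_iteratedDeriv_mul_iteratedDeriv (hf : ContDiff ℝ (⊤ : ℕ∞) f)
    (hg : ContDiff ℝ (⊤ : ℕ∞) g) (hgc : HasCompactSupport g) (m n k : ℕ) :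
    ∫ s, iteratedDeriv (m + k) f s * iteratedDeriv n g s =
      (-1) ^ k * ∫ s, iteratedDeriv m f s * iteratedDeriv (n + k) g s := by
  have hint (i j : ℕ) : Integrable (iteratedDeriv i f * iteratedDeriv j g) :=
    ((hf.continuous_iteratedDeriv i (by exact_mod_cast le_top)).mul
      (hg.continuous_iteratedDeriv j (by exact_mod_cast le_top))).integrable_of_hasCompactSupport
      (hasCompactSupport_iteratedDeriv hgc j).mul_left
  induction k generalizing n with
  | zero => simp
  | succ k ih =>
    have hparts := integral_mul_deriv_eq_deriv_mul_of_integrable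
      (fun s _ ↦ hasDerivAt_iteratedDeriv hf (m + k) s)
      (fun s _ ↦ hasDerivAt_iteratedDeriv hg n s) (hint _ _) (hint _ _) (hint _ _)
    rw [← add_assoc, ← neg_eq_iff_eq_neg.2 hparts, ih, add_right_comm, ← add_assoc, pow_succ]
    ring

end IteratedDeriv

section OrthonormalBasis

variable {E : Type*} [NormedAddCommGroup E] [InnerProductSpace ℝ E] {ι : Type*} [Fintype ι]

theorem laplacian_eq_sum_fderiv_fderiv [FiniteDimensional ℝ E] (b : OrthonormalBasis ι ℝ E)
    {f : E → ℝ} (hf : ContDiff ℝ 2 f) (x : E) :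
    Δ f x = ∑ i, fderiv ℝ (fun y ↦ fderiv ℝ f y (b i)) x (b i) := by
  have hf' : DifferentiableAt ℝ (fderiv ℝ f) x :=
    (hf.fderiv_right (m := 1) (by norm_num)).differentiable one_ne_zero x
  simp [laplacian_eq_iteratedFDeriv_orthonormalBasis f b, iteratedFDeriv_two_apply,
    fderiv_clm_apply hf' (differentiableAt_const _)]

theorem norm_gradient_sq_eq_sum [CompleteSpace E]
    (b : OrthonormalBasis ι ℝ E) (u : E → ℝ) (x : E) :
    ‖gradient u x‖ ^ 2 = ∑ i, fderiv ℝ u x (b i) ^ 2 := by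
  have hinner (i : ι) : ⟪gradient u x, b i⟫ = fderiv ℝ u x (b i) := by
    rw [gradient, toDual_symm_apply]
  simp [← b.sum_sq_norm_inner_left (gradient u x), hinner]

end OrthonormalBasis

section Wave

variable {E : Type*} [NormedAddCommGroup E] [InnerProductSpace ℝ E] [FiniteDimensional ℝ E]

/-- A classical solution of the wave equation on `ℝ × E`. The equation is written with the second
derivative of the function of space-time, so that it applies to plane waves directly. -/
structure IsWaveSolution (w : ℝ × E → ℝ) : Prop where
  contDiff : ContDiff ℝ 2 w
  wave_eq : ∀ p, fderiv ℝ (fun q ↦ fderiv ℝ w q (1, 0)) p (1, 0) =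
    ∑ i, fderiv ℝ (fun q ↦ fderiv ℝ w q (0, stdOrthonormalBasis ℝ E i)) p
      (0, stdOrthonormalBasis ℝ E i)

/-- The gradient `(∂ₜw, ∇w)` of a function on space-time, as a vector of the Euclidean product
`ℝ × E`; its squared norm is twice the energy density. -/
def spacetimeGradient (w : ℝ × E → ℝ) (p : ℝ × E) : WithLp 2 (ℝ × E) :=
  (toDual ℝ (WithLp 2 (ℝ × E))).symm
    (fderiv ℝ w p ∘L (WithLp.prodContinuousLinearEquiv 2 ℝ ℝ E).toContinuousLinearMap)

variable {w w₁ w₂ : ℝ × E → ℝ}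

theorem inner_spacetimeGradient (w : ℝ × E → ℝ) (p : ℝ × E) (v : WithLp 2 (ℝ × E)) :
    ⟪spacetimeGradient w p, v⟫ = fderiv ℝ w p v.ofLp := by
  simp [spacetimeGradient, toDual_symm_apply]

theorem fst_spacetimeGradient (w : ℝ × E → ℝ) (p : ℝ × E) :
    (spacetimeGradient w p).fst = fderiv ℝ w p (1, 0) := by
  simpa [WithLp.prod_inner_apply] using inner_spacetimeGradient w p (WithLp.toLp 2 (1, 0))

theorem inner_snd_spacetimeGradient (w : ℝ × E → ℝ) (p : ℝ × E) (v : E) :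
    ⟪(spacetimeGradient w p).snd, v⟫ = fderiv ℝ w p (0, v) := by
  simpa [WithLp.prod_inner_apply] using inner_spacetimeGradient w p (WithLp.toLp 2 (0, v))

theorem norm_sq_spacetimeGradient {ι : Type*} [Fintype ι] (b : OrthonormalBasis ι ℝ E)
    (w : ℝ × E → ℝ) (p : ℝ × E) :
    ‖spacetimeGradient w p‖ ^ 2 = fderiv ℝ w p (1, 0) ^ 2 + ∑ i, fderiv ℝ w p (0, b i) ^ 2 := by
  rw [WithLp.prod_norm_sq_eq_of_L2, ← b.sum_sq_norm_inner_left (spacetimeGradient w p).snd,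
    fst_spacetimeGradient]
  simp [inner_snd_spacetimeGradient]

theorem norm_sq_spacetimeGradient_eq_norm_sq_gradient_add (hw : ContDiff ℝ 1 w) (t : ℝ) (x : E) :
    ‖spacetimeGradient w (t, x)‖ ^ 2 =
      ‖gradient (fun y ↦ w (t, y)) x‖ ^ 2 + deriv (fun s ↦ w (s, x)) t ^ 2 := by
  rw [norm_sq_spacetimeGradient (stdOrthonormalBasis ℝ E),
    norm_gradient_sq_eq_sum (stdOrthonormalBasis ℝ E), deriv_comp_prodMk_left hw, add_comm]
  simp only [fderiv_comp_prodMk_right hw]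

theorem spacetimeGradient_eq_zero_iff {p : ℝ × E} :
    spacetimeGradient w p = 0 ↔ fderiv ℝ w p = 0 := by
  rw [spacetimeGradient, map_eq_zero_iff _ (LinearIsometryEquiv.injective _)]
  refine ⟨fun h ↦ ?_, fun h ↦ by simp [h]⟩
  ext v <;> simpa using DFunLike.congr_fun h (WithLp.toLp 2 (_, _))

theorem continuous_spacetimeGradient (hw : ContDiff ℝ 1 w) : Continuous (spacetimeGradient w) :=
  (LinearIsometryEquiv.continuous _).comp
    ((hw.continuous_fderiv one_ne_zero).clm_comp continuous_const)

theorem IsWaveSolution.of_deriv_deriv_eq_laplacian (hw : ContDiff ℝ 2 w)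
    (hwave : ∀ t x, deriv (fun s ↦ deriv (fun r ↦ w (r, x)) s) t = Δ (fun y ↦ w (t, y)) x) :
    IsWaveSolution w where
  contDiff := hw
  wave_eq := fun (t, x) ↦ by
    have h := hwave t x
    have hslice : ContDiff ℝ 2 fun y ↦ w (t, y) := hw.comp (contDiff_prodMk_right t)
    rw [laplacian_eq_sum_fderiv_fderiv (stdOrthonormalBasis ℝ E) hslice] at h
    simp only [deriv_comp_prodMk_left (hw.of_le one_le_two),
      fderiv_comp_prodMk_right (hw.of_le one_le_two)] at h
    rw [deriv_comp_prodMk_left (contDiff_fderiv_apply hw _)] at h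
    simpa only [fderiv_comp_prodMk_right (contDiff_fderiv_apply hw _)] using h

theorem IsWaveSolution.sub (h₁ : IsWaveSolution w₁) (h₂ : IsWaveSolution w₂) :
    IsWaveSolution (w₁ - w₂) where
  contDiff := h₁.contDiff.sub h₂.contDiff
  wave_eq p := by
    have hpartial (v q : ℝ × E) :
        fderiv ℝ (w₁ - w₂) q v = fderiv ℝ w₁ q v - fderiv ℝ w₂ q v := by
      rw [fderiv_sub (h₁.contDiff.differentiable two_ne_zero q)
        (h₂.contDiff.differentiable two_ne_zero q), sub_apply]
    have hpartial₂ (v : ℝ × E) : fderiv ℝ (fun q ↦ fderiv ℝ (w₁ - w₂) q v) p v =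
        fderiv ℝ (fun q ↦ fderiv ℝ w₁ q v) p v - fderiv ℝ (fun q ↦ fderiv ℝ w₂ q v) p v := by
      simp only [hpartial]
      rw [fderiv_fun_sub ((contDiff_fderiv_apply h₁.contDiff v).differentiable one_ne_zero p)
        ((contDiff_fderiv_apply h₂.contDiff v).differentiable one_ne_zero p), sub_apply]
    simp only [hpartial₂, h₁.wave_eq, h₂.wave_eq, Finset.sum_sub_distrib]

end Wave

section EnergyIdentity

variable {E : Type*} [NormedAddCommGroup E] [InnerProductSpace ℝ E] [FiniteDimensional ℝ E]
  {w χ : ℝ × E → ℝ}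

theorem contDiff_norm_sq_spacetimeGradient (hw : ContDiff ℝ 2 w) :
    ContDiff ℝ 1 fun p ↦ ‖spacetimeGradient w p‖ ^ 2 := by
  simp only [norm_sq_spacetimeGradient (stdOrthonormalBasis ℝ E)]
  exact ((contDiff_fderiv_apply hw _).pow 2).add
    (.sum fun i _ ↦ (contDiff_fderiv_apply hw _).pow 2)

theorem IsWaveSolution.weighted_energy_identity (hw : IsWaveSolution w) (hχ : ContDiff ℝ 1 χ)
    (p : ℝ × E) :
    fderiv ℝ (fun q ↦ χ q * ‖spacetimeGradient w q‖ ^ 2) p (1, 0) =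
      2 * ∑ i, fderiv ℝ (fun q ↦ χ q * (fderiv ℝ w q (1, 0) *
        fderiv ℝ w q (0, stdOrthonormalBasis ℝ E i))) p (0, stdOrthonormalBasis ℝ E i) +
      (‖spacetimeGradient w p‖ ^ 2 * fderiv ℝ χ p (1, 0) -
        2 * fderiv ℝ w p (1, 0) * fderiv ℝ χ p (0, (spacetimeGradient w p).snd)) := by
  have hwave := hw.wave_eq p
  set b := stdOrthonormalBasis ℝ E
  have hχ' := (hχ.differentiable one_ne_zero p).hasFDerivAt
  have hpartial (v : ℝ × E) :=
    ((contDiff_fderiv_apply hw.contDiff v).differentiable one_ne_zero p).hasFDerivAt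
  have hflux (i) := (hχ'.fun_mul ((hpartial (1, 0)).fun_mul (hpartial (0, b i)))).fderiv
  have hdensity := (hχ'.fun_mul (((hpartial (1, 0)).fun_mul (hpartial (1, 0))).fun_add
    (.fun_sum (u := Finset.univ) fun i _ ↦ (hpartial (0, b i)).fun_mul (hpartial (0, b i))))).fderiv
  have hgrad : fderiv ℝ χ p (0, (spacetimeGradient w p).snd) =
      ∑ i, fderiv ℝ w p (0, b i) * fderiv ℝ χ p (0, b i) := by
    conv_lhs => rw [← b.sum_repr' (spacetimeGradient w p).snd]
    simp only [real_inner_comm, inner_snd_spacetimeGradient]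
    simpa only [map_smul, ContinuousLinearMap.comp_apply, ContinuousLinearMap.inr_apply,
      smul_eq_mul] using map_sum (fderiv ℝ χ p ∘L .inr ℝ ℝ E)
        (fun i ↦ fderiv ℝ w p (0, b i) • b i) Finset.univ
  simp only [norm_sq_spacetimeGradient b, hgrad, sq]
  rw [hdensity]
  simp only [hflux]
  simp only [add_apply, smul_apply, sum_apply, smul_eq_mul,
    fderiv_fderiv_apply_comm hw.contDiff p _ (1, 0), hwave, Finset.sum_add_distrib, mul_add,
    ← Finset.mul_sum, mul_assoc]
  ring

end EnergyIdentity

section LightConeCutoff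

variable {E : Type*} [NormedAddCommGroup E]

/-- A smooth cutoff at time `t` to the ball of radius about `R - t`, used to localize the energy to
a backward light cone. The norm of `(1, x)` replaces that of `x` for smoothness at `x = 0`. -/
def lightConeCutoff (R : ℝ) (p : ℝ × E) : ℝ :=
  Real.smoothTransition (R - p.1 - ‖WithLp.toLp 2 ((1 : ℝ), p.2)‖)

theorem norm_le_norm_toLp_one (x : E) : ‖x‖ ≤ ‖WithLp.toLp 2 ((1 : ℝ), x)‖ := by
  simpa using WithLp.norm_snd_le _ (WithLp.toLp 2 ((1 : ℝ), x))

theorem norm_toLp_one_le (x : E) : ‖WithLp.toLp 2 ((1 : ℝ), x)‖ ≤ 1 + ‖x‖ := by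
  rw [WithLp.prod_norm_eq_of_L2, Real.sqrt_le_iff]
  refine ⟨by positivity, ?_⟩
  change ‖(1 : ℝ)‖ ^ 2 + ‖x‖ ^ 2 ≤ (1 + ‖x‖) ^ 2
  rw [norm_one]
  nlinarith [norm_nonneg x]

theorem norm_toLp_one_sub_le (x y : E) :
    ‖WithLp.toLp 2 ((1 : ℝ), x)‖ - ‖WithLp.toLp 2 ((1 : ℝ), y)‖ ≤ ‖x - y‖ := by
  refine (norm_sub_norm_le _ _).trans_eq ?_
  rw [← WithLp.toLp_sub, Prod.mk_sub_mk, sub_self, WithLp.prod_norm_eq_of_L2]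
  simp

theorem lightConeCutoff_nonneg (R : ℝ) (p : ℝ × E) : 0 ≤ lightConeCutoff R p :=
  Real.smoothTransition.nonneg _

theorem lightConeCutoff_le_one (R : ℝ) (p : ℝ × E) : lightConeCutoff R p ≤ 1 :=
  Real.smoothTransition.le_one _

theorem lightConeCutoff_eq_zero {R : ℝ} {p : ℝ × E} (hp : R ≤ p.1 + ‖p.2‖) :
    lightConeCutoff R p = 0 :=
  Real.smoothTransition.zero_of_nonpos (by linarith [norm_le_norm_toLp_one p.2])

theorem lightConeCutoff_eq_one {R : ℝ} {p : ℝ × E} (hp : p.1 + ‖p.2‖ + 2 ≤ R) :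
    lightConeCutoff R p = 1 :=
  Real.smoothTransition.one_of_one_le (by linarith [norm_toLp_one_le p.2])

variable [InnerProductSpace ℝ E]

theorem norm_sq_mul_sub_nonpos_of_causal {L : ℝ × E →L[ℝ] ℝ} (hL : ∀ v, ‖v‖ ≤ 1 → L (1, v) ≤ 0)
    (G : WithLp 2 (ℝ × E)) : ‖G‖ ^ 2 * L (1, 0) - 2 * G.fst * L (0, G.snd) ≤ 0 := by
  have hG : ‖G‖ ^ 2 = G.fst ^ 2 + ‖G.snd‖ ^ 2 := by
    rw [WithLp.prod_norm_sq_eq_of_L2, Real.norm_eq_abs, sq_abs]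
  rcases eq_or_ne G 0 with rfl | hG0
  · simp
  have hGpos : 0 < ‖G‖ ^ 2 := by positivity
  have hv : ‖(-2 * G.fst / ‖G‖ ^ 2) • G.snd‖ ≤ 1 := by
    rw [norm_smul, Real.norm_eq_abs, abs_div, abs_of_pos hGpos, div_mul_eq_mul_div,
      div_le_one hGpos, abs_mul, abs_neg, abs_two, hG, ← sq_abs G.fst]
    nlinarith [sq_nonneg (|G.fst| - ‖G.snd‖)]
  calc ‖G‖ ^ 2 * L (1, 0) - 2 * G.fst * L (0, G.snd)
      = ‖G‖ ^ 2 * L ((1, 0) + (-2 * G.fst / ‖G‖ ^ 2) • (0, G.snd)) := by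
        rw [map_add, map_smul, smul_eq_mul]
        field_simp
        rw [sub_eq_add_neg]
    _ ≤ 0 := mul_nonpos_of_nonneg_of_nonpos (by positivity) (by simpa using hL _ hv)

theorem contDiff_lightConeCutoff (R : ℝ) : ContDiff ℝ 1 (lightConeCutoff (E := E) R) := by
  refine Real.smoothTransition.contDiff.comp
    ((contDiff_const.sub contDiff_fst).sub (ContDiff.norm ℝ ?_ fun p h ↦ ?_))
  · exact (WithLp.prodContinuousLinearEquiv 2 ℝ ℝ E).symm.contDiff.comp
      (contDiff_const.prodMk contDiff_snd)
  · simpa using congr($(h).fst)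

theorem fderiv_lightConeCutoff_nonpos (R : ℝ) (p : ℝ × E) {v : E} (hv : ‖v‖ ≤ 1) :
    fderiv ℝ (lightConeCutoff R) p (1, v) ≤ 0 := by
  have hline : Antitone fun s : ℝ ↦ lightConeCutoff R (p + s • ((1 : ℝ), v)) := by
    intro s s' hs
    refine Real.smoothTransition.monotone ?_
    have hdist := norm_toLp_one_sub_le (p.2 + s • v) (p.2 + s' • v)
    rw [add_sub_add_left_eq_sub, ← sub_smul, norm_smul, Real.norm_eq_abs, abs_sub_comm,
      abs_of_nonneg (sub_nonneg.2 hs)] at hdist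
    simp only [Prod.fst_add, Prod.snd_add, Prod.smul_fst, Prod.smul_snd, smul_eq_mul, mul_one]
    nlinarith
  have hderiv : HasDerivAt (fun s : ℝ ↦ lightConeCutoff R (p + s • ((1 : ℝ), v)))
      (fderiv ℝ (lightConeCutoff R) p (1, v)) 0 :=
    ((contDiff_lightConeCutoff R).differentiable one_ne_zero p).hasFDerivAt.hasLineDerivAt _
  exact hderiv.deriv ▸ hline.deriv_nonpos

end LightConeCutoff

section LightConeCutoffSupport

variable {E : Type*} [NormedAddCommGroup E]

theorem hasCompactSupport_lightConeCutoff_mul [ProperSpace E] {R t : ℝ} (ht : 0 ≤ t) (f : E → ℝ) :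
    HasCompactSupport fun x ↦ lightConeCutoff R (t, x) * f x := by
  refine .of_support_subset_isCompact (isCompact_closedBall 0 R) fun x hx ↦ ?_
  contrapose! hx
  rw [mem_closedBall_zero_iff, not_le] at hx
  rw [Function.notMem_support, lightConeCutoff_eq_zero (by simpa using by linarith), zero_mul]

theorem fderiv_lightConeCutoff_mul_eq_zero [NormedSpace ℝ E] {R : ℝ} {p : ℝ × E}
    (hp : R < p.1 + ‖p.2‖) (f : ℝ × E → ℝ) :
    fderiv ℝ (fun q ↦ lightConeCutoff R q * f q) p = 0 := by
  have hzero : (fun q ↦ lightConeCutoff R q * f q) =ᶠ[𝓝 p] fun _ ↦ 0 := by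
    filter_upwards [continuousAt_const.eventually_lt
      (by fun_prop : ContinuousAt (fun q : ℝ × E ↦ q.1 + ‖q.2‖) p) hp] with q hq
    rw [lightConeCutoff_eq_zero hq.le, zero_mul]
  rw [hzero.fderiv_eq, fderiv_const_apply]

variable [MeasureSpace E]

theorem setIntegral_closedBall_lightConeCutoff_mul {R t : ℝ} (ht : 0 ≤ t) (f : E → ℝ) :
    ∫ x in closedBall 0 R, lightConeCutoff R (t, x) * f x =
      ∫ x, lightConeCutoff R (t, x) * f x := by
  refine setIntegral_eq_integral_of_forall_compl_eq_zero fun x hx ↦ ?_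
  rw [mem_closedBall_zero_iff, not_le] at hx
  rw [lightConeCutoff_eq_zero (by simpa using by linarith), zero_mul]

end LightConeCutoffSupport

section EnergyInequality

variable {E : Type*} [NormedAddCommGroup E] [InnerProductSpace ℝ E] [FiniteDimensional ℝ E]
  [MeasurableSpace E] [BorelSpace E] {w : ℝ × E → ℝ}

theorem hasDerivAt_weighted_energy (hw : ContDiff ℝ 2 w) (R t : ℝ) :
    HasDerivAt
      (fun t ↦ ∫ x in closedBall 0 R, lightConeCutoff R (t, x) * ‖spacetimeGradient w (t, x)‖ ^ 2)
      (∫ x in closedBall 0 R,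
        fderiv ℝ (fun p ↦ lightConeCutoff R p * ‖spacetimeGradient w p‖ ^ 2) (t, x) (1, 0)) t := by
  set e : ℝ × E → ℝ := fun p ↦ lightConeCutoff R p * ‖spacetimeGradient w p‖ ^ 2
  have he : ContDiff ℝ 1 e :=
    (contDiff_lightConeCutoff R).mul (contDiff_norm_sq_spacetimeGradient hw)
  have he' : Continuous fun p ↦ fderiv ℝ e p ∘L .inl ℝ ℝ E :=
    (he.continuous_fderiv one_ne_zero).clm_comp continuous_const
  have hderiv := hasFDerivAt_setIntegral_of_continuous (μ := volume) (isCompact_closedBall 0 R)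
    (f := fun t x ↦ e (t, x)) (f' := fun t x ↦ fderiv ℝ e (t, x) ∘L .inl ℝ ℝ E)
    he.continuous he' (fun t x ↦ HasFDerivAt.comp (g := e) t
      (he.differentiable one_ne_zero (t, x)).hasFDerivAt (hasFDerivAt_prodMk_left t x)) t
  have hint : IntegrableOn (fun x ↦ fderiv ℝ e (t, x) ∘L .inl ℝ ℝ E) (closedBall 0 R) :=
    (he'.comp (by fun_prop : Continuous fun x : E ↦ (t, x))).continuousOn.integrableOn_compact
      (isCompact_closedBall 0 R)
  convert hderiv.hasDerivAt using 1
  rw [ContinuousLinearMap.integral_apply hint]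
  simp

theorem integrableOn_closedBall_fderiv_apply {f : ℝ × E → ℝ} (hf : ContDiff ℝ 1 f) (R t : ℝ)
    (v : ℝ × E) : IntegrableOn (fun x ↦ fderiv ℝ f (t, x) v) (closedBall 0 R) :=
  (((hf.continuous_fderiv one_ne_zero).comp (Continuous.prodMk_right t)).clm_apply
    continuous_const).continuousOn.integrableOn_compact (isCompact_closedBall 0 R)

theorem setIntegral_fderiv_lightConeCutoff_mul_eq_zero {f : ℝ × E → ℝ} (hf : ContDiff ℝ 1 f)
    {R t : ℝ} (ht : 0 < t) (v : E) :
    ∫ x in closedBall 0 R, fderiv ℝ (fun p ↦ lightConeCutoff R p * f p) (t, x) (0, v) = 0 := by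
  rw [setIntegral_eq_integral_of_forall_compl_eq_zero fun x hx ↦ ?_,
    integral_fderiv_prod_eq_zero ((contDiff_lightConeCutoff R).mul hf)
      (hasCompactSupport_lightConeCutoff_mul ht.le _)]
  rw [mem_closedBall_zero_iff, not_le] at hx
  rw [fderiv_lightConeCutoff_mul_eq_zero (p := (t, x)) (by simpa using by linarith)]
  rfl

theorem IsWaveSolution.setIntegral_fderiv_weighted_energy_nonpos (hw : IsWaveSolution w)
    (R : ℝ) {t : ℝ} (ht : 0 < t) :
    ∫ x in closedBall 0 R,
      fderiv ℝ (fun p ↦ lightConeCutoff R p * ‖spacetimeGradient w p‖ ^ 2) (t, x) (1, 0) ≤ 0 := by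
  set b := stdOrthonormalBasis ℝ E
  have hχ := contDiff_lightConeCutoff (E := E) R
  set g : Fin (finrank ℝ E) → ℝ × E → ℝ := fun i q ↦ fderiv ℝ w q (1, 0) * fderiv ℝ w q (0, b i)
  have hg (i) : ContDiff ℝ 1 (g i) :=
    (contDiff_fderiv_apply hw.contDiff _).mul (contDiff_fderiv_apply hw.contDiff _)
  set flux : Fin (finrank ℝ E) → ℝ × E → ℝ := fun i q ↦ lightConeCutoff R q * g i q
  have hflux_int (i) := integrableOn_closedBall_fderiv_apply (hχ.mul (hg i)) R t (0, b i)
  calc ∫ x in closedBall 0 R,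
        fderiv ℝ (fun p ↦ lightConeCutoff R p * ‖spacetimeGradient w p‖ ^ 2) (t, x) (1, 0)
      ≤ ∫ x in closedBall 0 R, 2 * ∑ i, fderiv ℝ (flux i) (t, x) (0, b i) := by
        refine setIntegral_mono_on (integrableOn_closedBall_fderiv_apply
            (hχ.mul (contDiff_norm_sq_spacetimeGradient hw.contDiff)) R t (1, 0))
          ((integrable_finsetSum _ fun i _ ↦ hflux_int i).const_mul 2)
          measurableSet_closedBall fun x _ ↦ ?_
        have hcone := norm_sq_mul_sub_nonpos_of_causal
          (fun v hv ↦ fderiv_lightConeCutoff_nonpos R (t, x) hv) (spacetimeGradient w (t, x))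
        rw [fst_spacetimeGradient] at hcone
        rw [hw.weighted_energy_identity hχ]
        linarith
    _ = 0 := by
      rw [integral_const_mul, integral_finsetSum _ fun i _ ↦ hflux_int i]
      simp only [setIntegral_fderiv_lightConeCutoff_mul_eq_zero (hg _) ht, Finset.sum_const_zero,
        mul_zero]

theorem IsWaveSolution.antitoneOn_weighted_energy (hw : IsWaveSolution w) (R : ℝ) :
    AntitoneOn (fun t ↦ ∫ x, lightConeCutoff R (t, x) * ‖spacetimeGradient w (t, x)‖ ^ 2)
      (Ici 0) := by
  have hderiv := hasDerivAt_weighted_energy hw.contDiff R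
  refine (antitoneOn_of_deriv_nonpos (convex_Ici 0)
    (fun t _ ↦ (hderiv t).continuousAt.continuousWithinAt)
    (fun t _ ↦ (hderiv t).differentiableAt.differentiableWithinAt) fun t ht ↦ ?_).congr
    fun t ht ↦ setIntegral_closedBall_lightConeCutoff_mul ht _
  rw [interior_Ici] at ht
  exact (hderiv t).deriv.trans_le (hw.setIntegral_fderiv_weighted_energy_nonpos R ht)

theorem IsWaveSolution.setIntegral_closedBall_le (hw : IsWaveSolution w)
    (hw₀ : Integrable fun x ↦ ‖spacetimeGradient w (0, x)‖ ^ 2) {t : ℝ} (ht : 0 ≤ t) (ρ : ℝ) :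
    ∫ x in closedBall 0 ρ, ‖spacetimeGradient w (t, x)‖ ^ 2 ≤
      ∫ x, ‖spacetimeGradient w (0, x)‖ ^ 2 := by
  set R := t + ρ + 2
  have hG := continuous_spacetimeGradient (hw.contDiff.of_le one_le_two)
  have hcutoff_int : Integrable fun x ↦ lightConeCutoff R (t, x) *
      ‖spacetimeGradient w (t, x)‖ ^ 2 :=
    (((contDiff_lightConeCutoff R).continuous.comp (Continuous.prodMk_right t)).mul
      (by fun_prop)).integrable_of_hasCompactSupport (hasCompactSupport_lightConeCutoff_mul ht _)
  calc ∫ x in closedBall 0 ρ, ‖spacetimeGradient w (t, x)‖ ^ 2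
      = ∫ x in closedBall 0 ρ, lightConeCutoff R (t, x) * ‖spacetimeGradient w (t, x)‖ ^ 2 := by
        refine setIntegral_congr_fun measurableSet_closedBall fun x hx ↦ ?_
        rw [mem_closedBall_zero_iff] at hx
        rw [lightConeCutoff_eq_one (by simpa [R] using by linarith), one_mul]
    _ ≤ ∫ x, lightConeCutoff R (t, x) * ‖spacetimeGradient w (t, x)‖ ^ 2 :=
        setIntegral_le_integral hcutoff_int
          (.of_forall fun x ↦ mul_nonneg (lightConeCutoff_nonneg _ _) (sq_nonneg _))
    _ ≤ ∫ x, lightConeCutoff R (0, x) * ‖spacetimeGradient w (0, x)‖ ^ 2 :=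
        hw.antitoneOn_weighted_energy R self_mem_Ici ht ht
    _ ≤ ∫ x, ‖spacetimeGradient w (0, x)‖ ^ 2 :=
        integral_mono_of_nonneg
          (.of_forall fun x ↦ mul_nonneg (lightConeCutoff_nonneg _ _) (sq_nonneg _)) hw₀
          (.of_forall fun x ↦ mul_le_of_le_one_left (sq_nonneg _) (lightConeCutoff_le_one _ _))

theorem IsWaveSolution.integrable_norm_sq_spacetimeGradient (hw : IsWaveSolution w)
    (hw₀ : Integrable fun x ↦ ‖spacetimeGradient w (0, x)‖ ^ 2) {t : ℝ} (ht : 0 ≤ t) :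
    Integrable fun x ↦ ‖spacetimeGradient w (t, x)‖ ^ 2 := by
  have hG := continuous_spacetimeGradient (hw.contDiff.of_le one_le_two)
  have hcont : Continuous fun x ↦ ‖spacetimeGradient w (t, x)‖ ^ 2 := by fun_prop
  exact (aecover_closedBall tendsto_id).integrable_of_integral_bounded_of_nonneg_ae _
    (fun ρ ↦ hcont.continuousOn.integrableOn_compact (isCompact_closedBall 0 ρ))
    (.of_forall fun x ↦ sq_nonneg _)
    (.of_forall fun ρ ↦ hw.setIntegral_closedBall_le hw₀ ht ρ)

theorem IsWaveSolution.integral_norm_sq_spacetimeGradient_le (hw : IsWaveSolution w)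
    (hw₀ : Integrable fun x ↦ ‖spacetimeGradient w (0, x)‖ ^ 2) {t : ℝ} (ht : 0 ≤ t) :
    ∫ x, ‖spacetimeGradient w (t, x)‖ ^ 2 ≤ ∫ x, ‖spacetimeGradient w (0, x)‖ ^ 2 :=
  le_of_tendsto ((aecover_closedBall tendsto_id).integral_tendsto_of_countably_generated
    (hw.integrable_norm_sq_spacetimeGradient hw₀ ht))
    (.of_forall fun ρ ↦ hw.setIntegral_closedBall_le hw₀ ht ρ)

theorem IsWaveSolution.fderiv_eq_zero (hw : IsWaveSolution w) (hw₀ : ∀ x, fderiv ℝ w (0, x) = 0)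
    {t : ℝ} (ht : 0 ≤ t) (x : E) : fderiv ℝ w (t, x) = 0 := by
  have hG := continuous_spacetimeGradient (hw.contDiff.of_le one_le_two)
  have hG₀ (x : E) : spacetimeGradient w (0, x) = 0 := spacetimeGradient_eq_zero_iff.2 (hw₀ x)
  have hw₀_int : Integrable fun x ↦ ‖spacetimeGradient w (0, x)‖ ^ 2 := by simp [hG₀]
  have henergy : ∫ x, ‖spacetimeGradient w (t, x)‖ ^ 2 = 0 :=
    ((hw.integral_norm_sq_spacetimeGradient_le hw₀_int ht).trans_eq (by simp [hG₀])).antisymm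
      (integral_nonneg fun x ↦ sq_nonneg _)
  rw [integral_eq_zero_iff_of_nonneg (fun x ↦ sq_nonneg _)
    (hw.integrable_norm_sq_spacetimeGradient hw₀_int ht)] at henergy
  have hcont : Continuous fun x ↦ ‖spacetimeGradient w (t, x)‖ ^ 2 := by fun_prop
  have hzero : (fun x ↦ ‖spacetimeGradient w (t, x)‖ ^ 2) = 0 :=
    (hcont.ae_eq_iff_eq volume continuous_zero).1 henergy
  simpa [spacetimeGradient_eq_zero_iff] using congrFun hzero x

end EnergyInequality

section PolarCoordinates

variable {E F : Type*} [NormedAddCommGroup E] [NormedSpace ℝ E] [MeasurableSpace E] [BorelSpace E]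
  [NormedAddCommGroup F] {μ : Measure E}

open scoped Pointwise in
theorem measurePreserving_neg_toSphere [μ.IsNegInvariant] :
    MeasurePreserving (fun ω : sphere (0 : E) 1 ↦ -ω) μ.toSphere μ.toSphere := by
  have hneg : Measurable fun ω : sphere (0 : E) 1 ↦ -ω := continuous_neg.measurable
  refine ⟨hneg, ?_⟩
  ext s hs
  have hsector : Ioo (0 : ℝ) 1 • (Subtype.val '' (-s)) = -(Ioo (0 : ℝ) 1 • (Subtype.val '' s)) := by
    rw [← Set.smul_neg]
    congr 1
    ext x
    simp only [mem_image, Set.mem_neg]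
    exact ⟨fun ⟨ω, hω, h⟩ ↦ ⟨-ω, hω, by simp [← h]⟩, fun ⟨ω, hω, h⟩ ↦ ⟨-ω, by simpa, by simp [h]⟩⟩
  rw [Measure.map_apply hneg hs, Measure.toSphere_apply' _ hs, Measure.toSphere_apply' _ (hneg hs)]
  change _ * μ (Ioo (0 : ℝ) 1 • (Subtype.val '' (-s))) = _
  rw [hsector, Measure.measure_neg]

theorem integral_toSphere_comp_neg [NormedSpace ℝ F] [μ.IsNegInvariant] (f : sphere (0 : E) 1 → F) :
    ∫ ω, f (-ω) ∂μ.toSphere = ∫ ω, f ω ∂μ.toSphere :=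
  measurePreserving_neg_toSphere.integral_comp (Homeomorph.neg _).measurableEmbedding f

variable [FiniteDimensional ℝ E] [μ.IsAddHaarMeasure] {f : E → F}

theorem integrable_toSphere_prod (hf : Integrable f μ) :
    Integrable (fun p : sphere (0 : E) 1 × Ioi (0 : ℝ) ↦ f (p.2.1 • (p.1 : E)))
      (μ.toSphere.prod (.volumeIoiPow (finrank ℝ E - 1))) := by
  rw [← μ.measurePreserving_homeomorphUnitSphereProd.integrable_comp_emb
    (homeomorphUnitSphereProd E).measurableEmbedding]
  have hsub : Integrable (fun x : ({0}ᶜ : Set E) ↦ f x) (μ.comap (↑)) := by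
    have h := (MeasurableEmbedding.subtype_coe (measurableSet_singleton (0 : E)).compl)
      |>.integrable_map_iff (μ := μ.comap (↑)) (g := f)
    rw [map_comap_subtype_coe (measurableSet_singleton (0 : E)).compl] at h
    exact h.1 hf.integrableOn
  refine hsub.congr (.of_forall fun x ↦ ?_)
  change f x = f ((homeomorphUnitSphereProd E).symm (homeomorphUnitSphereProd E x))
  rw [Homeomorph.symm_apply_apply]

variable [NormedSpace ℝ F]

theorem integral_volumeIoiPow (n : ℕ) (f : ℝ → F) :
    ∫ r : Ioi (0 : ℝ), f r ∂(.volumeIoiPow n) = ∫ r in Ioi (0 : ℝ), r ^ n • f r := by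
  simp only [Measure.volumeIoiPow, ENNReal.ofReal]
  rw [integral_withDensity_eq_integral_smul (measurable_subtype_coe.pow_const _).real_toNNReal,
    integral_subtype_comap measurableSet_Ioi fun r ↦ Real.toNNReal (r ^ n) • f r]
  refine setIntegral_congr_fun measurableSet_Ioi fun r hr ↦ ?_
  rw [NNReal.smul_def, Real.coe_toNNReal _ (pow_nonneg (mem_Ioi.1 hr).le _)]

theorem integrable_toSphere_integral_Ioi (hf : Integrable f μ) :
    Integrable (fun ω : sphere (0 : E) 1 ↦
      ∫ r in Ioi (0 : ℝ), r ^ (finrank ℝ E - 1) • f (r • (ω : E))) μ.toSphere := by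
  simp only [← integral_volumeIoiPow]
  exact (integrable_toSphere_prod hf).integral_prod_left

theorem integral_eq_integral_toSphere_Ioi [Nontrivial E] (hf : Integrable f μ) :
    ∫ x, f x ∂μ = ∫ ω : sphere (0 : E) 1,
      (∫ r in Ioi (0 : ℝ), r ^ (finrank ℝ E - 1) • f (r • (ω : E))) ∂μ.toSphere := by
  simp only [← integral_volumeIoiPow]
  rw [← integral_prod _ (integrable_toSphere_prod hf)]
  calc ∫ x, f x ∂μ = ∫ x : ({0}ᶜ : Set E), f x ∂(μ.comap (↑)) := by
        rw [integral_subtype_comap (measurableSet_singleton _).compl fun x ↦ f x,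
          restrict_compl_singleton]
    _ = ∫ x : ({0}ᶜ : Set E), f ((homeomorphUnitSphereProd E x).2.1 •
          ((homeomorphUnitSphereProd E x).1 : E)) ∂(μ.comap (↑)) := by
        refine integral_congr_ae (.of_forall fun x ↦ ?_)
        change f x = f ((homeomorphUnitSphereProd E).symm (homeomorphUnitSphereProd E x))
        rw [Homeomorph.symm_apply_apply]
    _ = _ := μ.measurePreserving_homeomorphUnitSphereProd.integral_comp
        (homeomorphUnitSphereProd E).measurableEmbedding
        fun p : sphere (0 : E) 1 × Ioi (0 : ℝ) ↦ f (p.2.1 • (p.1 : E))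

theorem integral_toSphere_integral_eq_two_smul {k : ℕ} (hE : finrank ℝ E = 2 * k + 1)
    (hf : Integrable f μ)
    (hline : ∀ ω : sphere (0 : E) 1, Integrable fun r : ℝ ↦ r ^ (2 * k) • f (r • (ω : E))) :
    ∫ ω : sphere (0 : E) 1, (∫ r : ℝ, r ^ (2 * k) • f (r • (ω : E))) ∂μ.toSphere =
      (2 : ℝ) • ∫ x, f x ∂μ := by
  have : Nontrivial E := nontrivial_of_finrank_pos (R := ℝ) (by omega)
  set half : sphere (0 : E) 1 → F := fun ω ↦ ∫ r in Ioi (0 : ℝ), r ^ (2 * k) • f (r • (ω : E))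
  have hhalf : Integrable half μ.toSphere := by
    simpa [hE] using integrable_toSphere_integral_Ioi hf
  have hsplit (ω : sphere (0 : E) 1) :
      ∫ r : ℝ, r ^ (2 * k) • f (r • (ω : E)) = half ω + half (-ω) := by
    have hneg := integral_comp_neg_Ioi (0 : ℝ) fun r ↦ r ^ (2 * k) • f (r • (ω : E))
    rw [neg_zero] at hneg
    rw [← integral_add_compl measurableSet_Ioi (hline ω), compl_Ioi, ← hneg]
    simp [half, pow_mul]
  simp_rw [hsplit]
  have hhalf_neg : Integrable (fun ω ↦ half (-ω)) μ.toSphere :=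
    measurePreserving_neg_toSphere.integrable_comp_of_integrable hhalf
  rw [integral_add hhalf hhalf_neg, integral_toSphere_comp_neg,
    integral_eq_integral_toSphere_Ioi hf, two_smul]
  simp [half, hE]

end PolarCoordinates

section Slicing

variable {E F : Type*} [NormedAddCommGroup E] [InnerProductSpace ℝ E]
  [NormedAddCommGroup F]

theorem finrank_orthogonal_span_sphere {n : ℕ} (hE : finrank ℝ E = n + 1) (ω : sphere (0 : E) 1) :
    finrank ℝ (ℝ ∙ (ω : E))ᗮ = n :=
  have : Fact (finrank ℝ E = n + 1) := ⟨hE⟩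
  Submodule.finrank_orthogonal_span_singleton (ne_zero_of_mem_unit_sphere ω)

theorem inner_smul_add_orthogonal (ω : sphere (0 : E) 1) (s : ℝ) (y : (ℝ ∙ (ω : E))ᗮ) :
    ⟪s • (ω : E) + y, (ω : E)⟫ = s := by
  rw [inner_add_left, Submodule.mem_orthogonal_singleton_iff_inner_left.1 y.2, real_inner_smul_left,
    real_inner_self_eq_norm_sq, norm_eq_of_mem_sphere ω]
  ring

theorem norm_smul_add_orthogonal_sq (ω : sphere (0 : E) 1) (s : ℝ) (y : (ℝ ∙ (ω : E))ᗮ) :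
    ‖s • (ω : E) + y‖ ^ 2 = s ^ 2 + ‖y‖ ^ 2 := by
  rw [norm_add_sq_real, real_inner_smul_left,
    Submodule.mem_orthogonal_singleton_iff_inner_right.1 y.2, norm_smul, norm_eq_of_mem_sphere ω]
  simp

theorem abs_le_norm_smul_add_orthogonal (ω : sphere (0 : E) 1) (s : ℝ) (y : (ℝ ∙ (ω : E))ᗮ) :
    |s| ≤ ‖s • (ω : E) + y‖ := by
  refine abs_le_of_sq_le_sq ?_ (norm_nonneg _)
  rw [norm_smul_add_orthogonal_sq]
  exact le_add_of_nonneg_right (sq_nonneg _)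

theorem norm_le_norm_smul_add_orthogonal (ω : sphere (0 : E) 1) (s : ℝ) (y : (ℝ ∙ (ω : E))ᗮ) :
    ‖y‖ ≤ ‖s • (ω : E) + y‖ := by
  refine le_of_sq_le_sq ?_ (norm_nonneg _)
  rw [norm_smul_add_orthogonal_sq]
  exact le_add_of_nonneg_left (sq_nonneg _)

variable [FiniteDimensional ℝ E] [MeasurableSpace E] [BorelSpace E]

/-- The coordinates `(s, y) ↦ s • ω + y` on `E` adapted to the hyperplanes orthogonal to `ω`. -/
def sliceEquiv (ω : sphere (0 : E) 1) : ℝ × (ℝ ∙ (ω : E))ᗮ ≃ᵐ E :=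
  ((MeasurableEquiv.prodCongr
    (LinearIsometryEquiv.toSpanUnitSingleton (ω : E)
      (norm_eq_of_mem_sphere ω)).toHomeomorph.toMeasurableEquiv (.refl _)).trans
    (MeasurableEquiv.toLp 2 _)).trans
    (ℝ ∙ (ω : E)).orthogonalDecomposition.symm.toHomeomorph.toMeasurableEquiv

theorem measurePreserving_sliceEquiv (ω : sphere (0 : E) 1) :
    MeasurePreserving (sliceEquiv ω) := by
  have hline := (LinearIsometryEquiv.toSpanUnitSingleton (ω : E)
    (norm_eq_of_mem_sphere ω)).measurePreserving.prod (.id (volume : Measure (ℝ ∙ (ω : E))ᗮ))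
  exact (ℝ ∙ (ω : E)).orthogonalDecomposition.symm.measurePreserving.comp
    ((WithLp.volume_preserving_toLp _ _).comp hline)

theorem integrable_prod_orthogonal (ω : sphere (0 : E) 1) {f : E → F} (hf : Integrable f) :
    Integrable fun p : ℝ × (ℝ ∙ (ω : E))ᗮ ↦ f (p.1 • (ω : E) + p.2) :=
  (measurePreserving_sliceEquiv ω).integrable_comp_of_integrable hf

theorem integral_prod_orthogonal [NormedSpace ℝ F] (ω : sphere (0 : E) 1) (f : E → F) :
    ∫ p : ℝ × (ℝ ∙ (ω : E))ᗮ, f (p.1 • (ω : E) + p.2) = ∫ x, f x :=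
  (measurePreserving_sliceEquiv ω).integral_comp' f

end Slicing

section RadonTransform

variable {E : Type*} [NormedAddCommGroup E] [InnerProductSpace ℝ E] [FiniteDimensional ℝ E]
  [MeasurableSpace E] [BorelSpace E]

/-- The Radon transform of `u`: its integral over the hyperplane `{x | ⟪x, ω⟫ = s}`. -/
def radonTransform (u : E → ℝ) (ω : sphere (0 : E) 1) (s : ℝ) : ℝ :=
  ∫ y : (ℝ ∙ (ω : E))ᗮ, u (s • (ω : E) + y)

variable {u : E → ℝ}

theorem radonTransform_neg_neg (u : E → ℝ) (ω : sphere (0 : E) 1) (s : ℝ) :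
    radonTransform u (-ω) (-s) = radonTransform u ω s := by
  have hspan : ℝ ∙ ((-ω : sphere (0 : E) 1) : E) = ℝ ∙ (ω : E) := by
    rw [coe_neg_sphere, ← Set.neg_singleton, Submodule.span_neg]
  have hcongr {K L : Submodule ℝ E} (h : K = L) (f : E → ℝ) :
      ∫ y : Kᗮ, f y = ∫ y : Lᗮ, f y := by rw [h]
  simp only [radonTransform, coe_neg_sphere, neg_smul_neg]
  exact hcongr hspan fun y ↦ u (s • (ω : E) + y)

theorem radonTransform_eq_zero {r s : ℝ} (hur : ∀ x, r < ‖x‖ → u x = 0) (ω : sphere (0 : E) 1)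
    (hs : r < |s|) : radonTransform u ω s = 0 := by
  have hzero (y : (ℝ ∙ (ω : E))ᗮ) : u (s • (ω : E) + y) = 0 :=
    hur _ (hs.trans_le (abs_le_norm_smul_add_orthogonal ω s y))
  simp [radonTransform, hzero]

theorem continuous_radonTransform (hu : Continuous u) (huc : HasCompactSupport u)
    (ω : sphere (0 : E) 1) : Continuous (radonTransform u ω) := by
  obtain ⟨r, hr⟩ := huc.isBounded.subset_closedBall 0
  have hball (s : ℝ) : radonTransform u ω s =
      ∫ y in closedBall (0 : (ℝ ∙ (ω : E))ᗮ) r, u (s • (ω : E) + y) := by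
    refine (setIntegral_eq_integral_of_forall_compl_eq_zero fun y hy ↦ ?_).symm
    contrapose! hy
    have := hr (subset_tsupport _ hy)
    rw [mem_closedBall_zero_iff] at this ⊢
    exact (norm_le_norm_smul_add_orthogonal ω s y).trans this
  rw [funext hball]
  exact continuous_parametric_integral_of_continuous (by fun_prop) (isCompact_closedBall 0 r)

theorem integrable_radonTransform (hu : Integrable u) (ω : sphere (0 : E) 1) :
    Integrable (radonTransform u ω) :=
  (integrable_prod_orthogonal ω hu).integral_prod_left

theorem fourier_radonTransform (hu : Integrable u) (ω : sphere (0 : E) 1) (ρ : ℝ) :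
    𝓕 (fun s ↦ (radonTransform u ω s : ℂ)) ρ = 𝓕 (fun x ↦ (u x : ℂ)) (ρ • (ω : E)) := by
  have hint : Integrable fun x ↦ Real.fourierChar (-⟪x, ρ • (ω : E)⟫) • (u x : ℂ) :=
    (Real.fourierIntegral_convergent_iff _).2 hu.ofReal
  rw [Real.fourier_eq, Real.fourier_eq, ← integral_prod_orthogonal ω, Measure.volume_eq_prod,
    integral_prod _ (integrable_prod_orthogonal ω hint)]
  refine integral_congr_ae (.of_forall fun s ↦ ?_)
  simp only [real_inner_smul_right, inner_smul_add_orthogonal, Circle.smul_def]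
  rw [integral_smul, integral_complex_ofReal, radonTransform, real_inner_comm]
  simp [mul_comm]

end RadonTransform

section FourierRealFunction

variable {E : Type*} [NormedAddCommGroup E] [InnerProductSpace ℝ E] {u : E → ℝ}

theorem exists_schwartzMap_eq_ofReal (hu : ContDiff ℝ (⊤ : ℕ∞) u) (huc : HasCompactSupport u) :
    ∃ U : 𝓢(E, ℂ), ⇑U = fun x ↦ (u x : ℂ) :=
  ⟨(huc.comp_left Complex.ofReal_zero).toSchwartzMap (Complex.ofRealCLM.contDiff.comp hu), rfl⟩

variable [FiniteDimensional ℝ E] [MeasurableSpace E] [BorelSpace E]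

theorem exists_schwartzMap_eq_fourier_ofReal (hu : ContDiff ℝ (⊤ : ℕ∞) u)
    (huc : HasCompactSupport u) : ∃ g : 𝓢(E, ℂ), ⇑g = 𝓕 fun x ↦ (u x : ℂ) := by
  obtain ⟨U, hU⟩ := exists_schwartzMap_eq_ofReal hu huc
  exact ⟨𝓕 U, by rw [SchwartzMap.fourier_coe, hU]⟩

theorem integral_norm_sq_fourier_ofReal (hu : ContDiff ℝ (⊤ : ℕ∞) u)
    (huc : HasCompactSupport u) : ∫ ξ, ‖𝓕 (fun x ↦ (u x : ℂ)) ξ‖ ^ 2 = ∫ x, u x ^ 2 := by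
  obtain ⟨U, hU⟩ := exists_schwartzMap_eq_ofReal hu huc
  have h := U.integral_norm_sq_fourier
  rw [SchwartzMap.fourier_coe, hU] at h
  simpa using h

theorem integrable_norm_sq_fourier_ofReal (hu : ContDiff ℝ (⊤ : ℕ∞) u)
    (huc : HasCompactSupport u) : Integrable fun ξ ↦ ‖𝓕 (fun x ↦ (u x : ℂ)) ξ‖ ^ 2 := by
  obtain ⟨g, hg⟩ := exists_schwartzMap_eq_fourier_ofReal hu huc
  rw [← hg]
  exact (memLp_two_iff_integrable_sq_norm g.continuous.aestronglyMeasurable).1 (g.memLp 2)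

theorem fourier_ofReal_fderiv_apply (hu : ContDiff ℝ (⊤ : ℕ∞) u) (huc : HasCompactSupport u)
    (v ξ : E) : 𝓕 (fun x ↦ (fderiv ℝ u x v : ℂ)) ξ =
      2 * Real.pi * Complex.I * ⟪ξ, v⟫ * 𝓕 (fun x ↦ (u x : ℂ)) ξ := by
  obtain ⟨U, hU⟩ := exists_schwartzMap_eq_ofReal hu huc
  have hderiv : ⇑(LineDeriv.lineDerivOp v U) = fun x ↦ (fderiv ℝ u x v : ℂ) := by
    ext x
    rw [SchwartzMap.lineDerivOp_apply_eq_fderiv, hU]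
    have h := (hu.differentiable (by simp) x).hasFDerivAt
    exact congr($((Complex.ofRealCLM.hasFDerivAt.comp x h).fderiv) v)
  have htemp : (⟪·, v⟫ : E → ℝ).HasTemperateGrowth := by fun_prop
  have h := congr($(SchwartzMap.fourier_lineDerivOp_eq U v) ξ)
  rw [smul_apply, SchwartzMap.smulLeftCLM_apply_apply htemp, SchwartzMap.fourier_coe,
    SchwartzMap.fourier_coe, hderiv, hU] at h
  rw [h, smul_eq_mul, Complex.real_smul]
  ring

theorem norm_sq_fourier_ofReal_fderiv_apply (hu : ContDiff ℝ (⊤ : ℕ∞) u)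
    (huc : HasCompactSupport u) (v ξ : E) :
    ‖𝓕 (fun x ↦ (fderiv ℝ u x v : ℂ)) ξ‖ ^ 2 =
      (2 * Real.pi) ^ 2 * ⟪ξ, v⟫ ^ 2 * ‖𝓕 (fun x ↦ (u x : ℂ)) ξ‖ ^ 2 := by
  rw [fourier_ofReal_fderiv_apply hu huc]
  simp [mul_pow]

theorem norm_sq_mul_norm_sq_fourier_ofReal_eq_sum (hu : ContDiff ℝ (⊤ : ℕ∞) u)
    (huc : HasCompactSupport u) (ξ : E) :
    (2 * Real.pi) ^ 2 * ‖ξ‖ ^ 2 * ‖𝓕 (fun x ↦ (u x : ℂ)) ξ‖ ^ 2 =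
      ∑ i, ‖𝓕 (fun x ↦ (fderiv ℝ u x (stdOrthonormalBasis ℝ E i) : ℂ)) ξ‖ ^ 2 := by
  simp_rw [norm_sq_fourier_ofReal_fderiv_apply hu huc, ← Finset.sum_mul, ← Finset.mul_sum,
    ← (stdOrthonormalBasis ℝ E).sum_sq_norm_inner_left ξ, Real.norm_eq_abs, sq_abs]

theorem integrable_norm_sq_mul_norm_sq_fourier_ofReal (hu : ContDiff ℝ (⊤ : ℕ∞) u)
    (huc : HasCompactSupport u) :
    Integrable fun ξ ↦ (2 * Real.pi) ^ 2 * ‖ξ‖ ^ 2 * ‖𝓕 (fun x ↦ (u x : ℂ)) ξ‖ ^ 2 := by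
  simp_rw [norm_sq_mul_norm_sq_fourier_ofReal_eq_sum hu huc]
  exact integrable_finsetSum _ fun i _ ↦ integrable_norm_sq_fourier_ofReal
    ((hu.fderiv_right (by simp)).clm_apply contDiff_const) (huc.fderiv_apply ℝ _)

theorem integral_norm_sq_mul_norm_sq_fourier_ofReal (hu : ContDiff ℝ (⊤ : ℕ∞) u)
    (huc : HasCompactSupport u) :
    ∫ ξ, (2 * Real.pi) ^ 2 * ‖ξ‖ ^ 2 * ‖𝓕 (fun x ↦ (u x : ℂ)) ξ‖ ^ 2 =
      ∫ x, ‖gradient u x‖ ^ 2 := by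
  have hsmooth (i) : ContDiff ℝ (⊤ : ℕ∞) fun x ↦ fderiv ℝ u x (stdOrthonormalBasis ℝ E i) :=
    (hu.fderiv_right (by simp)).clm_apply contDiff_const
  have hsupport i := huc.fderiv_apply ℝ (stdOrthonormalBasis ℝ E i)
  simp_rw [norm_sq_mul_norm_sq_fourier_ofReal_eq_sum hu huc,
    norm_gradient_sq_eq_sum (stdOrthonormalBasis ℝ E)]
  have hint (i) : Integrable fun x ↦ fderiv ℝ u x (stdOrthonormalBasis ℝ E i) ^ 2 := by
    refine Continuous.integrable_of_hasCompactSupport ((hsmooth i).continuous.pow 2) ?_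
    exact (hsupport i).comp_left (g := fun a ↦ a ^ 2) (by simp)
  have hint' (i) := integrable_norm_sq_fourier_ofReal (hsmooth i) (hsupport i)
  rw [integral_finsetSum _ fun i _ ↦ hint' i, integral_finsetSum _ fun i _ ↦ hint i]
  exact Finset.sum_congr rfl fun i _ ↦
    integral_norm_sq_fourier_ofReal (hsmooth i) (hsupport i)

theorem ofReal_eq_integral_fourier (hu : ContDiff ℝ (⊤ : ℕ∞) u) (huc : HasCompactSupport u)
    (x : E) : (u x : ℂ) = ∫ ξ, Real.fourierChar ⟪ξ, x⟫ • 𝓕 (fun y ↦ (u y : ℂ)) ξ := by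
  obtain ⟨U, hU⟩ := exists_schwartzMap_eq_ofReal hu huc
  have h := congr($(FourierTransform.fourierInv_fourier_eq (F := 𝓢(E, ℂ)) U) x)
  rw [SchwartzMap.fourierInv_coe, SchwartzMap.fourier_coe, hU, Real.fourierInv_eq] at h
  exact h.symm

end FourierRealFunction

section RadonInversion

variable {E : Type*} [NormedAddCommGroup E] [InnerProductSpace ℝ E]

/-- The restriction `ρ ↦ g (ρ • ω)` of a Schwartz function to the line spanned by `ω`. -/
def lineRestriction (ω : sphere (0 : E) 1) : 𝓢(E, ℂ) →L[ℂ] 𝓢(ℝ, ℂ) :=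
  SchwartzMap.compCLMOfAntilipschitz ℂ (g := fun ρ : ℝ ↦ ρ • (ω : E))
    (ContinuousLinearMap.toSpanSingleton ℝ (ω : E)).hasTemperateGrowth
    (LinearIsometry.toSpanSingleton ℝ E (norm_eq_of_mem_sphere ω)).antilipschitz

theorem lineRestriction_apply (ω : sphere (0 : E) 1) (g : 𝓢(E, ℂ)) (ρ : ℝ) :
    lineRestriction ω g ρ = g (ρ • (ω : E)) :=
  rfl

variable [FiniteDimensional ℝ E] [MeasurableSpace E] [BorelSpace E] {u : E → ℝ} {r : ℝ}

theorem hasCompactSupport_radonTransform (huc : HasCompactSupport u) (ω : sphere (0 : E) 1) :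
    HasCompactSupport (radonTransform u ω) := by
  obtain ⟨r, -, hr⟩ := huc.exists_pos_le_norm
  exact .intro (isCompact_closedBall 0 r) fun s hs ↦
    radonTransform_eq_zero (fun x hx ↦ hr x hx.le) ω (by simpa using hs)

theorem contDiff_radonTransform (hu : ContDiff ℝ (⊤ : ℕ∞) u) (huc : HasCompactSupport u)
    (ω : sphere (0 : E) 1) : ContDiff ℝ (⊤ : ℕ∞) (radonTransform u ω) := by
  obtain ⟨g, hg⟩ := exists_schwartzMap_eq_fourier_ofReal hu huc
  have hint := hu.continuous.integrable_of_hasCompactSupport (μ := volume) huc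
  have hfourier : 𝓕 (fun s ↦ (radonTransform u ω s : ℂ)) = lineRestriction ω g := by
    ext ρ
    rw [fourier_radonTransform hint, lineRestriction_apply, hg]
  have hinv : (fun s ↦ (radonTransform u ω s : ℂ)) = 𝓕⁻ (lineRestriction ω g) := by
    rw [SchwartzMap.fourierInv_coe, ← hfourier]
    refine (Continuous.fourierInv_fourier_eq ?_ ?_ ?_).symm
    · exact Complex.continuous_ofReal.comp (continuous_radonTransform hu.continuous huc ω)
    · exact (integrable_radonTransform hint ω).ofReal
    · exact hfourier ▸ (lineRestriction ω g).integrable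
  have hre : radonTransform u ω = fun s ↦ Complex.reCLM ((𝓕⁻ (lineRestriction ω g)) s) := by
    ext s
    simp [← hinv]
  rw [hre]
  exact Complex.reCLM.contDiff.comp (𝓕⁻ (lineRestriction ω g)).smooth'

theorem contDiff_iteratedDeriv_radonTransform (hu : ContDiff ℝ (⊤ : ℕ∞) u)
    (huc : HasCompactSupport u) (n : ℕ) (ω : sphere (0 : E) 1) :
    ContDiff ℝ (⊤ : ℕ∞) (iteratedDeriv n (radonTransform u ω)) := by
  rw [iteratedDeriv_eq_iterate]
  exact ContDiff.iterate_deriv n (contDiff_radonTransform hu huc ω)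

theorem iteratedDeriv_radonTransform_eq_zero (hur : ∀ x, r < ‖x‖ → u x = 0) (n : ℕ)
    (ω : sphere (0 : E) 1) {s : ℝ} (hs : r < |s|) :
    iteratedDeriv n (radonTransform u ω) s = 0 := by
  have hzero : radonTransform u ω =ᶠ[𝓝 s] fun _ ↦ 0 := by
    filter_upwards [(isOpen_lt continuous_const continuous_abs).mem_nhds hs] with σ hσ
    exact radonTransform_eq_zero hur ω hσ
  simp [hzero.iteratedDeriv_eq]

theorem iteratedDeriv_radonTransform_neg_neg (u : E → ℝ) (n : ℕ) (ω : sphere (0 : E) 1) (s : ℝ) :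
    iteratedDeriv n (radonTransform u (-ω)) (-s) =
      (-1) ^ n * iteratedDeriv n (radonTransform u ω) s := by
  have hneg : radonTransform u (-ω) = fun σ ↦ radonTransform u ω (-σ) := by
    ext σ
    rw [← radonTransform_neg_neg, neg_neg]
  rw [hneg, iteratedDeriv_comp_neg, neg_neg, smul_eq_mul]

theorem fourier_iteratedDeriv_radonTransform (hu : ContDiff ℝ (⊤ : ℕ∞) u)
    (huc : HasCompactSupport u) (n : ℕ) (ω : sphere (0 : E) 1) (ρ : ℝ) :
    𝓕 (fun s : ℝ ↦ ((iteratedDeriv n (radonTransform u ω) s : ℝ) : ℂ)) ρ =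
      (2 * Real.pi * Complex.I * ρ) ^ n * 𝓕 (fun x ↦ (u x : ℂ)) (ρ • (ω : E)) := by
  induction n with
  | zero =>
    simpa using fourier_radonTransform (hu.continuous.integrable_of_hasCompactSupport huc) ω ρ
  | succ n ih =>
    have h := fourier_ofReal_fderiv_apply (contDiff_iteratedDeriv_radonTransform hu huc n ω)
      (hasCompactSupport_iteratedDeriv (hasCompactSupport_radonTransform huc ω) n) 1 ρ
    simp only [fderiv_apply_one_eq_deriv, ← iteratedDeriv_succ] at h
    rw [h, ih]
    simp
    ring

theorem integral_integral_iteratedDeriv_radonTransform_sq {k : ℕ} (hE : finrank ℝ E = 2 * k + 1)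
    (hu : ContDiff ℝ (⊤ : ℕ∞) u) (huc : HasCompactSupport u) :
    ∫ ω, (∫ s, iteratedDeriv (k + 1) (radonTransform u ω) s ^ 2) ∂volume.toSphere =
      2 * (2 * Real.pi) ^ (2 * k) * ∫ x, ‖gradient u x‖ ^ 2 := by
  let F : E → ℝ := fun ξ ↦ (2 * Real.pi) ^ 2 * ‖ξ‖ ^ 2 * ‖𝓕 (fun x ↦ (u x : ℂ)) ξ‖ ^ 2
  have hpolar (ω : sphere (0 : E) 1) (ρ : ℝ) : ρ ^ (2 * k) • F (ρ • (ω : E)) =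
      ((2 * Real.pi) ^ (2 * k))⁻¹ *
        ‖𝓕 (fun s : ℝ ↦ ((iteratedDeriv (k + 1) (radonTransform u ω) s : ℝ) : ℂ)) ρ‖ ^ 2 := by
    have hsq : ‖2 * (Real.pi : ℂ) * Complex.I * ρ‖ ^ 2 = (2 * Real.pi) ^ 2 * ρ ^ 2 := by
      simp [mul_pow]
    have hpow : ‖2 * (Real.pi : ℂ) * Complex.I * ρ‖ ^ ((k + 1) * 2) =
        (2 * Real.pi) ^ (2 * k) * ρ ^ (2 * k) * ((2 * Real.pi) ^ 2 * ρ ^ 2) := by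
      rw [mul_comm (k + 1) 2, pow_mul, hsq, pow_succ, mul_pow, ← pow_mul, ← pow_mul]
    rw [fourier_iteratedDeriv_radonTransform hu huc, norm_mul, norm_pow, mul_pow (_ ^ (k + 1)),
      ← pow_mul, hpow]
    simp only [F, norm_smul, norm_eq_of_mem_sphere ω, mul_one, Real.norm_eq_abs, sq_abs,
      smul_eq_mul]
    field_simp
  have hsmooth := contDiff_iteratedDeriv_radonTransform hu huc (k + 1)
  have hsupport := fun ω : sphere (0 : E) 1 ↦
    hasCompactSupport_iteratedDeriv (hasCompactSupport_radonTransform huc ω) (k + 1)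
  have hline (ω : sphere (0 : E) 1) : Integrable fun ρ : ℝ ↦ ρ ^ (2 * k) • F (ρ • (ω : E)) := by
    simp_rw [hpolar ω]
    exact (integrable_norm_sq_fourier_ofReal (hsmooth ω) (hsupport ω)).const_mul _
  have hF : Integrable F := integrable_norm_sq_mul_norm_sq_fourier_ofReal hu huc
  have key := integral_toSphere_integral_eq_two_smul hE hF hline
  have hFint : ∫ ξ, F ξ = ∫ x, ‖gradient u x‖ ^ 2 :=
    integral_norm_sq_mul_norm_sq_fourier_ofReal hu huc
  simp_rw [hpolar, integral_const_mul, integral_norm_sq_fourier_ofReal (hsmooth _) (hsupport _),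
    hFint] at key
  field_simp at key
  rw [key, smul_eq_mul]
  ring

theorem integrable_fourier_iteratedDeriv_radonTransform (hu : ContDiff ℝ (⊤ : ℕ∞) u)
    (huc : HasCompactSupport u) (n : ℕ) (ω : sphere (0 : E) 1) :
    Integrable (𝓕 fun s : ℝ ↦ ((iteratedDeriv n (radonTransform u ω) s : ℝ) : ℂ)) := by
  obtain ⟨g, hg⟩ := exists_schwartzMap_eq_fourier_ofReal
    (contDiff_iteratedDeriv_radonTransform hu huc n ω)
    (hasCompactSupport_iteratedDeriv (hasCompactSupport_radonTransform huc ω) n)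
  exact hg ▸ g.integrable

theorem ofReal_iteratedDeriv_radonTransform_eq_integral (hu : ContDiff ℝ (⊤ : ℕ∞) u)
    (huc : HasCompactSupport u) (n : ℕ) (ω : sphere (0 : E) 1) (s : ℝ) :
    ((iteratedDeriv n (radonTransform u ω) s : ℝ) : ℂ) =
      ∫ ρ : ℝ, Real.fourierChar (ρ * s) •
        ((2 * Real.pi * Complex.I * ρ) ^ n * 𝓕 (fun x ↦ (u x : ℂ)) (ρ • (ω : E))) := by
  rw [ofReal_eq_integral_fourier (contDiff_iteratedDeriv_radonTransform hu huc n ω)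
    (hasCompactSupport_iteratedDeriv (hasCompactSupport_radonTransform huc ω) n)]
  simp_rw [fourier_iteratedDeriv_radonTransform hu huc]
  simp [mul_comm]

theorem continuous_iteratedDeriv_radonTransform (hu : ContDiff ℝ (⊤ : ℕ∞) u)
    (huc : HasCompactSupport u) (n : ℕ) :
    Continuous fun p : sphere (0 : E) 1 × ℝ ↦ iteratedDeriv n (radonTransform u p.1) p.2 := by
  obtain ⟨g, hg⟩ := exists_schwartzMap_eq_fourier_ofReal hu huc
  obtain ⟨C₁, -, hC₁⟩ := g.decay n 0
  obtain ⟨C₂, -, hC₂⟩ := g.decay (n + 2) 0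
  simp only [norm_iteratedFDeriv_zero] at hC₁ hC₂
  have hcont : Continuous fun q : (sphere (0 : E) 1 × ℝ) × ℝ ↦ Real.fourierChar (q.2 * q.1.2) •
      ((2 * Real.pi * Complex.I * q.2) ^ n * g (q.2 • (q.1.1 : E))) := by
    have := g.continuous
    have := Real.continuous_fourierChar
    fun_prop
  have hbound (p : sphere (0 : E) 1 × ℝ) (ρ : ℝ) : ‖Real.fourierChar (ρ * p.2) •
      ((2 * Real.pi * Complex.I * ρ) ^ n * g (ρ • (p.1 : E)))‖ ≤
        (2 * Real.pi) ^ n * ((C₁ + C₂) * (1 + ρ ^ 2)⁻¹) := by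
    have h₁ := hC₁ (ρ • (p.1 : E))
    have h₂ := hC₂ (ρ • (p.1 : E))
    simp only [norm_smul, norm_eq_of_mem_sphere, mul_one, Real.norm_eq_abs, pow_add,
      sq_abs] at h₁ h₂
    have hnorm : ‖2 * (Real.pi : ℂ) * Complex.I * ρ‖ = 2 * Real.pi * |ρ| := by
      simp [abs_of_pos Real.pi_pos]
    rw [Circle.norm_smul, norm_mul, norm_pow, hnorm, mul_pow, mul_assoc, ← div_eq_mul_inv]
    gcongr
    rw [le_div_iff₀ (by positivity)]
    linarith
  have hcomplex : Continuous fun p : sphere (0 : E) 1 × ℝ ↦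
      ((iteratedDeriv n (radonTransform u p.1) p.2 : ℝ) : ℂ) := by
    simp_rw [ofReal_iteratedDeriv_radonTransform_eq_integral hu huc, ← hg]
    exact continuous_of_dominated
      (fun p ↦ (hcont.comp (Continuous.prodMk_right p)).aestronglyMeasurable)
      (fun p ↦ .of_forall (hbound p)) ((integrable_inv_one_add_sq.const_mul _).const_mul _)
      (.of_forall fun ρ ↦ hcont.comp (Continuous.prodMk_left ρ))
  exact Complex.continuous_re.comp hcomplex

theorem integral_iteratedDeriv_radonTransform_inner {k : ℕ} (hE : finrank ℝ E = 2 * k + 1)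
    (hu : ContDiff ℝ (⊤ : ℕ∞) u) (huc : HasCompactSupport u) (x : E) :
    ∫ ω, iteratedDeriv (2 * k) (radonTransform u ω) ⟪x, (ω : E)⟫ ∂volume.toSphere =
      2 * (2 * Real.pi) ^ (2 * k) * (-1) ^ k * u x := by
  obtain ⟨g, hg⟩ := exists_schwartzMap_eq_fourier_ofReal hu huc
  let c : ℂ := (2 * Real.pi) ^ (2 * k) * (-1) ^ k
  have hc : c ≠ 0 := by simp [c, Real.pi_ne_zero]
  let F : E → ℂ := fun ξ ↦ Real.fourierChar ⟪ξ, x⟫ • g ξ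
  have hF : Integrable F := by
    simpa [F] using (Real.fourierIntegral_convergent_iff (-x)).2 (g.integrable (μ := volume))
  have hpolar (ω : sphere (0 : E) 1) (ρ : ℝ) : ρ ^ (2 * k) • F (ρ • (ω : E)) =
      c⁻¹ * Real.fourierChar (ρ * ⟪x, (ω : E)⟫) •
        ((2 * Real.pi * Complex.I * ρ) ^ (2 * k) * g (ρ • (ω : E))) := by
    have hpow : (2 * Real.pi * Complex.I * ρ : ℂ) ^ (2 * k) = c * (ρ : ℂ) ^ (2 * k) := by
      rw [mul_pow, mul_pow, pow_mul Complex.I, Complex.I_sq]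
    rw [hpow, mul_assoc c, ← smul_eq_mul c, smul_comm _ c, smul_eq_mul c,
      inv_mul_cancel_left₀ hc, real_inner_comm]
    simp only [F, real_inner_smul_left, Circle.smul_def, Complex.real_smul, smul_eq_mul]
    push_cast
    ring
  have hline (ω : sphere (0 : E) 1) : Integrable fun ρ : ℝ ↦ ρ ^ (2 * k) • F (ρ • (ω : E)) := by
    have hint := integrable_fourier_iteratedDeriv_radonTransform hu huc (2 * k) ω
    have hchar := (Real.fourierIntegral_convergent_iff (-⟪x, (ω : E)⟫)).2 hint
    simp_rw [hpolar, hg, ← fourier_iteratedDeriv_radonTransform hu huc]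
    simpa [mul_comm] using hchar.const_mul c⁻¹
  have key := integral_toSphere_integral_eq_two_smul hE hF hline
  rw [← Complex.ofReal_inj]
  have h : ((∫ ω, iteratedDeriv (2 * k) (radonTransform u ω) ⟪x, (ω : E)⟫ ∂volume.toSphere : ℝ) :
      ℂ) = c * (2 * u x) := by
    rw [← integral_complex_ofReal, ofReal_eq_integral_fourier hu huc x, ← hg]
    simp_rw [ofReal_iteratedDeriv_radonTransform_eq_integral hu huc, ← hg]
    simp_rw [hpolar, integral_const_mul] at key
    rw [inv_mul_eq_iff_eq_mul₀ hc] at key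
    simpa using key
  rw [h]
  simp [c]
  ring

end RadonInversion

section PlaneWavePhase

variable {E : Type*} [NormedAddCommGroup E] [InnerProductSpace ℝ E]

/-- The phase `(t, x) ↦ ⟪x, ω⟫ - t` of the plane waves travelling in the direction `ω`. -/
def planeWavePhase (ω : E) : ℝ × E →L[ℝ] ℝ :=
  innerSL ℝ ω ∘L .snd ℝ ℝ E - .fst ℝ ℝ E

theorem planeWavePhase_apply (ω : E) (p : ℝ × E) : planeWavePhase ω p = ⟪p.2, ω⟫ - p.1 := by
  simp [planeWavePhase, real_inner_comm]

theorem continuous_planeWavePhase : Continuous (planeWavePhase : E → ℝ × E →L[ℝ] ℝ) :=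
  ((innerSL ℝ).continuous.clm_comp continuous_const).sub continuous_const

theorem continuous_planeWavePhase_smul {h : sphere (0 : E) 1 → ℝ → ℝ} (hh : Continuous h.uncurry) :
    Continuous fun q : (ℝ × E) × sphere (0 : E) 1 ↦
      h q.2 (planeWavePhase (q.2 : E) q.1) • planeWavePhase (q.2 : E) := by
  have hphase : Continuous fun q : (ℝ × E) × sphere (0 : E) 1 ↦ planeWavePhase (q.2 : E) :=
    continuous_planeWavePhase.comp (continuous_subtype_val.comp continuous_snd)
  exact (hh.comp (continuous_snd.prodMk (hphase.clm_apply continuous_fst))).smul hphase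

theorem continuous_mul_planeWavePhase_apply {h : sphere (0 : E) 1 → ℝ → ℝ}
    (hh : Continuous h.uncurry) (v : ℝ × E) :
    Continuous (fun (ω : sphere (0 : E) 1) s ↦ h ω s * planeWavePhase (ω : E) v).uncurry :=
  hh.mul (((continuous_planeWavePhase (E := E)).comp
    (continuous_subtype_val.comp continuous_fst)).clm_apply continuous_const)

theorem sum_sq_planeWavePhase {ι : Type*} [Fintype ι] (b : OrthonormalBasis ι ℝ E)
    (ω : sphere (0 : E) 1) : ∑ i, planeWavePhase (ω : E) (0, b i) ^ 2 = 1 := by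
  simpa [planeWavePhase_apply] using b.sum_sq_norm_inner_right (ω : E)

end PlaneWavePhase

section PlaneWave

variable {E : Type*} [NormedAddCommGroup E] [InnerProductSpace ℝ E] [FiniteDimensional ℝ E]
  [MeasurableSpace E] [BorelSpace E]

/-- The superposition of the plane waves `(t, x) ↦ h ω (⟪x, ω⟫ - t)` over the directions `ω` of the
unit sphere. -/
def planeWave (h : sphere (0 : E) 1 → ℝ → ℝ) (p : ℝ × E) : ℝ :=
  ∫ ω : sphere (0 : E) 1, h ω (planeWavePhase (ω : E) p) ∂volume.toSphere

theorem integrable_toSphere_of_continuous {F : Type*} [NormedAddCommGroup F]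
    {f : sphere (0 : E) 1 → F} (hf : Continuous f) :
    Integrable f (volume : Measure E).toSphere :=
  hf.integrable_of_hasCompactSupport (.of_compactSpace f)

variable {h h' h'' : sphere (0 : E) 1 → ℝ → ℝ}

theorem hasFDerivAt_planeWave (hh : Continuous h.uncurry) (hh' : Continuous h'.uncurry)
    (hderiv : ∀ ω s, HasDerivAt (h ω) (h' ω s) s) (p : ℝ × E) :
    HasFDerivAt (planeWave h)
      (∫ ω : sphere (0 : E) 1, h' ω (planeWavePhase (ω : E) p) • planeWavePhase (ω : E)
        ∂volume.toSphere) p := by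
  have hphase : Continuous fun q : (ℝ × E) × sphere (0 : E) 1 ↦
      (q.2, planeWavePhase (q.2 : E) q.1) := by
    simp only [planeWavePhase_apply]
    fun_prop
  have := hasFDerivAt_setIntegral_of_continuous
    (μ := (volume : Measure E).toSphere)
    (f := fun (q : ℝ × E) (ω : sphere (0 : E) 1) ↦ h ω (planeWavePhase (ω : E) q))
    (f' := fun q ω ↦ h' ω (planeWavePhase (ω : E) q) • planeWavePhase (ω : E)) isCompact_univ
    (hh.comp hphase) (continuous_planeWavePhase_smul hh')
    (fun q ω ↦ (hderiv ω _).comp_hasFDerivAt q (planeWavePhase (ω : E)).hasFDerivAt) p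
  rwa [Measure.restrict_univ] at this

theorem fderiv_planeWave_apply (hh : Continuous h.uncurry) (hh' : Continuous h'.uncurry)
    (hderiv : ∀ ω s, HasDerivAt (h ω) (h' ω s) s) (p v : ℝ × E) :
    fderiv ℝ (planeWave h) p v =
      planeWave (fun ω s ↦ h' ω s * planeWavePhase (ω : E) v) p := by
  rw [(hasFDerivAt_planeWave hh hh' hderiv p).fderiv, ContinuousLinearMap.integral_apply]
  · rfl
  · exact integrable_toSphere_of_continuous
      ((continuous_planeWavePhase_smul hh').comp (Continuous.prodMk_right p))

theorem contDiff_one_planeWave (hh : Continuous h.uncurry) (hh' : Continuous h'.uncurry)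
    (hderiv : ∀ ω s, HasDerivAt (h ω) (h' ω s) s) : ContDiff ℝ 1 (planeWave h) := by
  refine contDiff_one_iff_hasFDerivAt.2 ⟨_, ?_, hasFDerivAt_planeWave hh hh' hderiv⟩
  have := continuous_parametric_integral_of_continuous
    (μ := (volume : Measure E).toSphere)
    (f := fun (q : ℝ × E) (ω : sphere (0 : E) 1) ↦
      h' ω (planeWavePhase (ω : E) q) • planeWavePhase (ω : E))
    (by exact continuous_planeWavePhase_smul hh') isCompact_univ
  rwa [Measure.restrict_univ] at this

theorem fderiv_fderiv_planeWave_apply (hh : Continuous h.uncurry) (hh' : Continuous h'.uncurry)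
    (hh'' : Continuous h''.uncurry) (hderiv : ∀ ω s, HasDerivAt (h ω) (h' ω s) s)
    (hderiv' : ∀ ω s, HasDerivAt (h' ω) (h'' ω s) s) (p v : ℝ × E) :
    fderiv ℝ (fun q ↦ fderiv ℝ (planeWave h) q v) p v =
      planeWave (fun ω s ↦ h'' ω s * planeWavePhase (ω : E) v ^ 2) p := by
  simp only [fderiv_planeWave_apply hh hh' hderiv,
    fderiv_planeWave_apply (continuous_mul_planeWavePhase_apply hh' v)
      (continuous_mul_planeWavePhase_apply hh'' v) fun ω s ↦ (hderiv' ω s).mul_const _,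
    mul_assoc, ← sq]

theorem contDiff_two_planeWave (hh : Continuous h.uncurry) (hh' : Continuous h'.uncurry)
    (hh'' : Continuous h''.uncurry) (hderiv : ∀ ω s, HasDerivAt (h ω) (h' ω s) s)
    (hderiv' : ∀ ω s, HasDerivAt (h' ω) (h'' ω s) s) : ContDiff ℝ 2 (planeWave h) := by
  refine (contDiff_succ_iff_fderiv_apply (n := 1)).2
    ⟨(contDiff_one_planeWave hh hh' hderiv).differentiable one_ne_zero, by simp, fun v ↦ ?_⟩
  simp only [fderiv_planeWave_apply hh hh' hderiv]
  exact contDiff_one_planeWave (continuous_mul_planeWavePhase_apply hh' v)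
    (continuous_mul_planeWavePhase_apply hh'' v) fun ω s ↦ (hderiv' ω s).mul_const _

theorem isWaveSolution_planeWave (hh : Continuous h.uncurry) (hh' : Continuous h'.uncurry)
    (hh'' : Continuous h''.uncurry) (hderiv : ∀ ω s, HasDerivAt (h ω) (h' ω s) s)
    (hderiv' : ∀ ω s, HasDerivAt (h' ω) (h'' ω s) s) : IsWaveSolution (planeWave h) := by
  refine ⟨contDiff_two_planeWave hh hh' hh'' hderiv hderiv', fun p ↦ ?_⟩
  have hterm (v : ℝ × E) : Integrable (fun ω : sphere (0 : E) 1 ↦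
      h'' ω (planeWavePhase (ω : E) p) * planeWavePhase (ω : E) v ^ 2) volume.toSphere := by
    refine integrable_toSphere_of_continuous ((hh''.comp (continuous_id.prodMk ?_)).mul ?_)
    all_goals simp only [planeWavePhase_apply]; fun_prop
  simp only [fderiv_fderiv_planeWave_apply hh hh' hh'' hderiv hderiv', planeWave]
  rw [← integral_finsetSum _ fun i _ ↦ hterm _]
  simp only [← Finset.mul_sum, sum_sq_planeWavePhase, planeWavePhase_apply (_ : E) (1, 0),
    inner_zero_left, zero_sub, neg_sq, one_pow, mul_one]

end PlaneWave

section InitialEnergy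

variable {E : Type*} [NormedAddCommGroup E] [InnerProductSpace ℝ E] [FiniteDimensional ℝ E]
  {u : E → ℝ} {w : ℝ × E → ℝ}

theorem norm_sq_spacetimeGradient_zero (hw : ContDiff ℝ 1 w) (hpos : ∀ x, w (0, x) = u x)
    (hvel : ∀ x, fderiv ℝ w (0, x) (1, 0) = 0) (x : E) :
    ‖spacetimeGradient w (0, x)‖ ^ 2 = ‖gradient u x‖ ^ 2 := by
  rw [norm_sq_spacetimeGradient_eq_norm_sq_gradient_add hw, deriv_comp_prodMk_left hw, hvel,
    funext hpos, zero_pow two_ne_zero, add_zero]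

theorem integrable_norm_sq_gradient [MeasurableSpace E] [BorelSpace E]
    (hu : ContDiff ℝ 1 u) (huc : HasCompactSupport u) :
    Integrable fun x ↦ ‖gradient u x‖ ^ 2 := by
  have hnorm (x : E) : ‖gradient u x‖ = ‖fderiv ℝ u x‖ := LinearIsometryEquiv.norm_map _ _
  have hsupp : HasCompactSupport fun x ↦ ‖fderiv ℝ u x‖ ^ 2 :=
    (huc.fderiv (𝕜 := ℝ)).comp_left (g := fun L : E →L[ℝ] ℝ ↦ ‖L‖ ^ 2) (by simp)
  simp only [hnorm]
  exact ((hu.continuous_fderiv one_ne_zero).norm.pow 2).integrable_of_hasCompactSupport hsupp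

end InitialEnergy

section Representation

variable {E : Type*} [NormedAddCommGroup E] [InnerProductSpace ℝ E] [FiniteDimensional ℝ E]
  [MeasurableSpace E] [BorelSpace E] {k : ℕ} {u : E → ℝ} {w w₁ w₂ : ℝ × E → ℝ}

theorem IsWaveSolution.fderiv_eq_of_initial_eq (h₁ : IsWaveSolution w₁) (h₂ : IsWaveSolution w₂)
    (hpos : ∀ x, w₁ (0, x) = w₂ (0, x))
    (hvel : ∀ x, fderiv ℝ w₁ (0, x) (1, 0) = fderiv ℝ w₂ (0, x) (1, 0)) {t : ℝ} (ht : 0 ≤ t)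
    (x : E) : fderiv ℝ w₁ (t, x) = fderiv ℝ w₂ (t, x) := by
  have hsub (p : ℝ × E) : fderiv ℝ (w₁ - w₂) p = fderiv ℝ w₁ p - fderiv ℝ w₂ p :=
    fderiv_sub (h₁.contDiff.differentiable two_ne_zero p)
      (h₂.contDiff.differentiable two_ne_zero p)
  have hpos' (x v : E) : fderiv ℝ w₁ (0, x) (0, v) = fderiv ℝ w₂ (0, x) (0, v) := by
    simp only [← fderiv_comp_prodMk_right (h₁.contDiff.of_le one_le_two), hpos,
      ← fderiv_comp_prodMk_right (h₂.contDiff.of_le one_le_two)]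
  refine sub_eq_zero.1 (hsub _ ▸ (h₁.sub h₂).fderiv_eq_zero (fun x ↦ ?_) ht x)
  rw [hsub, sub_eq_zero]
  ext v
  · simpa using hvel x
  · simpa using hpos' x v

/-- The reciprocal of the constant in the Radon inversion formula
`integral_iteratedDeriv_radonTransform_inner` in dimension `2 * k + 1`. -/
def radonInversionConst (k : ℕ) : ℝ := (2 * (2 * Real.pi) ^ (2 * k) * (-1) ^ k)⁻¹

/-- The `j`-th derivative of the Radon transform of `u`, normalized for dimension `2 * k + 1`; for
`j = 2 * k` it is the plane wave density of the wave with initial data `(u, 0)`. -/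
def radonDensity (k j : ℕ) (u : E → ℝ) (ω : sphere (0 : E) 1) (s : ℝ) : ℝ :=
  radonInversionConst k * iteratedDeriv j (radonTransform u ω) s

theorem continuous_radonDensity (hu : ContDiff ℝ (⊤ : ℕ∞) u) (huc : HasCompactSupport u) (j : ℕ) :
    Continuous (radonDensity k j u).uncurry :=
  continuous_const.mul (continuous_iteratedDeriv_radonTransform hu huc j)

theorem hasDerivAt_radonDensity (hu : ContDiff ℝ (⊤ : ℕ∞) u) (huc : HasCompactSupport u) (j : ℕ)
    (ω : sphere (0 : E) 1) (s : ℝ) :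
    HasDerivAt (radonDensity k j u ω) (radonDensity k (j + 1) u ω s) s :=
  (hasDerivAt_iteratedDeriv (contDiff_radonTransform hu huc ω) j s).const_mul _

theorem radonDensity_neg_neg (k j : ℕ) (u : E → ℝ) (ω : sphere (0 : E) 1) (s : ℝ) :
    radonDensity k j u (-ω) (-s) = (-1) ^ j * radonDensity k j u ω s := by
  rw [radonDensity, iteratedDeriv_radonTransform_neg_neg, radonDensity]
  ring

theorem radonDensity_eq_zero {r : ℝ} (hur : ∀ x, r < ‖x‖ → u x = 0) (j : ℕ)
    (ω : sphere (0 : E) 1) (s : ℝ) (hs : r < |s|) : radonDensity k j u ω s = 0 := by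
  rw [radonDensity, iteratedDeriv_radonTransform_eq_zero hur _ ω hs, mul_zero]

theorem isWaveSolution_planeWave_radonDensity (hu : ContDiff ℝ (⊤ : ℕ∞) u)
    (huc : HasCompactSupport u) (j : ℕ) : IsWaveSolution (planeWave (radonDensity k j u)) :=
  isWaveSolution_planeWave (continuous_radonDensity hu huc j)
    (continuous_radonDensity hu huc (j + 1)) (continuous_radonDensity hu huc (j + 2))
    (hasDerivAt_radonDensity hu huc j) (hasDerivAt_radonDensity hu huc (j + 1))

theorem planeWave_radonDensity_zero (hE : finrank ℝ E = 2 * k + 1) (hu : ContDiff ℝ (⊤ : ℕ∞) u)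
    (huc : HasCompactSupport u) (x : E) :
    planeWave (radonDensity k (2 * k) u) (0, x) = u x := by
  simp only [planeWave, radonDensity, planeWavePhase_apply, sub_zero]
  rw [integral_const_mul, integral_iteratedDeriv_radonTransform_inner hE hu huc,
    radonInversionConst, inv_mul_cancel_left₀ (by positivity)]

theorem fderiv_planeWave_radonDensity_zero (hu : ContDiff ℝ (⊤ : ℕ∞) u) (huc : HasCompactSupport u)
    (x : E) : fderiv ℝ (planeWave (radonDensity k (2 * k) u)) (0, x) (1, 0) = 0 := by
  rw [fderiv_planeWave_apply (continuous_radonDensity hu huc _) (continuous_radonDensity hu huc _)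
    (hasDerivAt_radonDensity hu huc _), ← self_eq_neg]
  simp only [planeWave, planeWavePhase_apply, sub_zero]
  refine (integral_toSphere_comp_neg _).symm.trans ((integral_congr_ae ?_).trans (integral_neg _))
  exact .of_forall fun ω ↦ by simp [radonDensity_neg_neg, pow_succ]

theorem IsWaveSolution.fderiv_eq_planeWave (hE : finrank ℝ E = 2 * k + 1) (hw : IsWaveSolution w)
    (hu : ContDiff ℝ (⊤ : ℕ∞) u) (huc : HasCompactSupport u) (hpos : ∀ x, w (0, x) = u x)
    (hvel : ∀ x, fderiv ℝ w (0, x) (1, 0) = 0) {t : ℝ} (ht : 0 ≤ t) (x : E) (v : ℝ × E) :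
    fderiv ℝ w (t, x) v =
      planeWave (fun ω s ↦ radonDensity k (2 * k + 1) u ω s * planeWavePhase (ω : E) v) (t, x) := by
  rw [← fderiv_planeWave_apply (continuous_radonDensity hu huc _)
    (continuous_radonDensity hu huc _) (hasDerivAt_radonDensity hu huc _)]
  refine congr($(hw.fderiv_eq_of_initial_eq (isWaveSolution_planeWave_radonDensity hu huc _)
    (fun x ↦ ?_) (fun x ↦ ?_) ht x) v)
  · rw [hpos, planeWave_radonDensity_zero hE hu huc]
  · rw [hvel, fderiv_planeWave_radonDensity_zero hu huc]

end Representation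

section QuadraticComposition

variable {g : ℝ → ℝ} {F : Type*} [NormedAddCommGroup F]

theorem hasCompactSupport_comp_add_norm_sq [ProperSpace F] (hgc : HasCompactSupport g) (s : ℝ) :
    HasCompactSupport fun z : F ↦ g (s + ‖z‖ ^ 2 / 2) := by
  have htop : Tendsto (fun z : F ↦ s + ‖z‖ ^ 2 / 2) (cocompact F) (cocompact ℝ) :=
    (tendsto_atTop_add_const_left _ s (((tendsto_pow_atTop two_ne_zero).comp
      tendsto_norm_cocompact_atTop).atTop_div_const two_pos)).mono_right atTop_le_cocompact
  rw [hasCompactSupport_iff_eventuallyEq, coclosedCompact_eq_cocompact] at hgc ⊢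
  exact htop.eventually hgc

theorem integral_Ioi_pow_mul_iteratedDeriv_add_sq (hg : ContDiff ℝ (⊤ : ℕ∞) g)
    (hgc : HasCompactSupport g) (s : ℝ) (n : ℕ) :
    ∫ y in Ioi (0 : ℝ), y ^ (2 * n + 1) * iteratedDeriv (n + 1) g (s + y ^ 2 / 2) =
      (-1) ^ (n + 1) * 2 ^ n * n.factorial * g s := by
  have hderiv (j : ℕ) (y : ℝ) : HasDerivAt (fun y ↦ iteratedDeriv j g (s + y ^ 2 / 2))
      (y * iteratedDeriv (j + 1) g (s + y ^ 2 / 2)) y := by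
    have hinner : HasDerivAt (fun y : ℝ ↦ s + y ^ 2 / 2) y y :=
      (((hasDerivAt_pow 2 y).div_const 2).const_add s).congr_deriv (by norm_num)
    exact ((hasDerivAt_iteratedDeriv hg j _).comp y hinner).congr_deriv (mul_comm _ _)
  have hsupp (j : ℕ) : HasCompactSupport fun y ↦ iteratedDeriv j g (s + y ^ 2 / 2) := by
    simpa only [Real.norm_eq_abs, sq_abs] using
      hasCompactSupport_comp_add_norm_sq (F := ℝ) (hasCompactSupport_iteratedDeriv hgc j) s
  have hint (m j : ℕ) : IntegrableOn (fun y ↦ y ^ m * iteratedDeriv j g (s + y ^ 2 / 2)) (Ioi 0) :=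
    (((continuous_pow m).mul (continuous_iff_continuousAt.2 fun y ↦
      (hderiv j y).continuousAt)).integrable_of_hasCompactSupport (hsupp j).mul_left).integrableOn
  have hlim (m j : ℕ) : Tendsto (fun y ↦ y ^ m * iteratedDeriv j g (s + y ^ 2 / 2)) atTop (𝓝 0) :=
    (hsupp j).mul_left.is_zero_at_infty.mono_left atTop_le_cocompact
  induction n with
  | zero =>
    have := integral_Ioi_of_hasDerivAt_of_tendsto' (fun y _ ↦ hderiv 0 y)
      (by simpa using hint 1 1) (by simpa using hlim 0 0)
    simpa using this
  | succ n ih =>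
    have hstep := integral_Ioi_of_hasDerivAt_of_tendsto' (a := 0)
      (f := fun y ↦ y ^ (2 * n + 2) * iteratedDeriv (n + 1) g (s + y ^ 2 / 2))
      (f' := fun y ↦ (2 * n + 2) * (y ^ (2 * n + 1) * iteratedDeriv (n + 1) g (s + y ^ 2 / 2)) +
        y ^ (2 * n + 3) * iteratedDeriv (n + 2) g (s + y ^ 2 / 2))
      (fun y _ ↦ ((hasDerivAt_pow (2 * n + 2) y).mul (hderiv (n + 1) y)).congr_deriv
        (by push_cast; ring))
      (((hint _ _).const_mul _).add (hint _ _)) (hlim _ _)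
    rw [integral_add ((hint _ _).const_mul _) (hint _ _), integral_const_mul, ih,
      zero_pow (by simp)] at hstep
    rw [show 2 * (n + 1) + 1 = 2 * n + 3 by ring, eq_sub_of_add_eq' hstep, Nat.factorial_succ]
    push_cast
    ring

theorem integral_iteratedDeriv_add_norm_sq [InnerProductSpace ℝ F] [FiniteDimensional ℝ F]
    [MeasurableSpace F] [BorelSpace F] {k : ℕ} (hF : finrank ℝ F = 2 * k)
    (hg : ContDiff ℝ (⊤ : ℕ∞) g) (hgc : HasCompactSupport g) (s : ℝ) :
    ∫ z : F, iteratedDeriv k g (s + ‖z‖ ^ 2 / 2) = (-(2 * Real.pi)) ^ k * g s := by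
  obtain _ | n := k
  · have : IsEmpty (Fin (finrank ℝ F)) := by simp [hF, Fin.isEmpty]
    rw [← (stdOrthonormalBasis ℝ F).measurePreserving_measurableEquiv.symm.integral_comp',
      volume_euclideanSpace_eq_dirac]
    simp [OrthonormalBasis.measurableEquiv]
  · have : Nontrivial F := nontrivial_of_finrank_pos (R := ℝ) (by omega)
    rw [integral_fun_norm_addHaar volume fun y ↦ iteratedDeriv (n + 1) g (s + y ^ 2 / 2),
      Measure.real, InnerProductSpace.volume_ball_of_dim_even hF, hF,
      show 2 * (n + 1) - 1 = 2 * n + 1 by omega]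
    simp only [smul_eq_mul, nsmul_eq_mul]
    rw [integral_Ioi_pow_mul_iteratedDeriv_add_sq hg hgc, ENNReal.ofReal_one, one_pow, one_mul,
      ENNReal.toReal_ofReal (by positivity), Nat.factorial_succ]
    have : (n.factorial : ℝ) ≠ 0 := by positivity
    push_cast
    field_simp
    rw [neg_pow (2 * Real.pi), mul_pow]
    ring

end QuadraticComposition

section ParabolicZoom

variable {E : Type*} [NormedAddCommGroup E] [InnerProductSpace ℝ E]

/-- The point `(t + s) • ω + √t • z`, where `x = s • ω + z` with `z` orthogonal to `ω`. As
`t → ∞` these are the coordinates in which the sphere of radius `t` is seen near `t • ω` as a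
fixed paraboloid. -/
def parabolicZoom (ω : sphere (0 : E) 1) (t : ℝ) (x : E) : E :=
  (t + ⟪x, ω⟫) • (ω : E) + √t • (x - ⟪x, ω⟫ • (ω : E))

theorem continuous_parabolicZoom (t : ℝ) :
    Continuous fun p : sphere (0 : E) 1 × E ↦ parabolicZoom p.1 t p.2 := by
  unfold parabolicZoom
  fun_prop

theorem inner_sub_inner_smul_self (ω : sphere (0 : E) 1) (x : E) :
    ⟪x - ⟪x, ω⟫ • (ω : E), (ω : E)⟫ = 0 := by
  simp [inner_sub_left, real_inner_smul_left]

theorem inner_parabolicZoom (ω : sphere (0 : E) 1) (t : ℝ) (x : E) :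
    ⟪parabolicZoom ω t x, (ω : E)⟫ = t + ⟪x, (ω : E)⟫ := by
  rw [parabolicZoom, inner_add_left, real_inner_smul_left _ _ √t, inner_sub_inner_smul_self]
  simp [real_inner_smul_left]

theorem norm_sq_parabolicZoom (ω : sphere (0 : E) 1) {t : ℝ} (ht : 0 ≤ t) (x : E) :
    ‖parabolicZoom ω t x‖ ^ 2 =
      (t + ⟪x, ω⟫) ^ 2 + t * ‖x - ⟪x, ω⟫ • (ω : E)‖ ^ 2 := by
  rw [parabolicZoom, norm_add_sq_real, real_inner_smul_left, real_inner_smul_right,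
    real_inner_comm (x - _), inner_sub_inner_smul_self, norm_smul, norm_smul,
    norm_eq_of_mem_sphere ω,
    mul_one, mul_pow, Real.norm_eq_abs, Real.norm_eq_abs, sq_abs, sq_abs, Real.sq_sqrt ht]
  ring

theorem norm_sq_eq_inner_sq_add (ω : sphere (0 : E) 1) (x : E) :
    ‖x‖ ^ 2 = ⟪x, ω⟫ ^ 2 + ‖x - ⟪x, ω⟫ • (ω : E)‖ ^ 2 := by
  rw [norm_sub_sq_real, real_inner_smul_right, norm_smul, norm_eq_of_mem_sphere ω, mul_one,
    Real.norm_eq_abs, sq_abs]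
  ring

theorem parabolicZoom_smul_add_orthogonal (ω : sphere (0 : E) 1) (t s : ℝ)
    (y : (ℝ ∙ (ω : E))ᗮ) :
    parabolicZoom ω t (s • (ω : E) + y) = (t + s) • (ω : E) + √t • (y : E) := by
  rw [parabolicZoom, inner_smul_add_orthogonal, add_sub_cancel_left]

theorem tendsto_inv_smul_parabolicZoom (ω : sphere (0 : E) 1) (x : E) :
    Tendsto (fun t : ℝ ↦ t⁻¹ • parabolicZoom ω t x) atTop (𝓝 ω) := by
  have hinv : Tendsto (fun t : ℝ ↦ 1 + t⁻¹ * ⟪x, (ω : E)⟫) atTop (𝓝 (1 + 0 * ⟪x, (ω : E)⟫)) :=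
    tendsto_const_nhds.add (tendsto_inv_atTop_zero.mul_const _)
  have hsqrt : Tendsto (fun t : ℝ ↦ (√t)⁻¹) atTop (𝓝 0) :=
    tendsto_inv_atTop_zero.comp Real.tendsto_sqrt_atTop
  have hlim := (hinv.smul_const (ω : E)).add (hsqrt.smul_const (x - ⟪x, ω⟫ • (ω : E)))
  rw [zero_mul, add_zero, one_smul, zero_smul, add_zero] at hlim
  refine hlim.congr' ?_
  filter_upwards [eventually_gt_atTop 0] with t ht
  rw [parabolicZoom, smul_add, smul_smul, smul_smul, mul_add, inv_mul_cancel₀ ht.ne',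
    ← div_eq_inv_mul (√t), Real.sqrt_div_self]

theorem tendsto_norm_parabolicZoom_sub (ω : sphere (0 : E) 1) (x : E) :
    Tendsto (fun t : ℝ ↦ ‖parabolicZoom ω t x‖ - t) atTop
      (𝓝 (⟪x, ω⟫ + ‖x - ⟪x, ω⟫ • (ω : E)‖ ^ 2 / 2)) := by
  have hnorm := (tendsto_inv_smul_parabolicZoom ω x).norm
  rw [norm_eq_of_mem_sphere ω] at hnorm
  have hnum : Tendsto (fun t : ℝ ↦ 2 * ⟪x, (ω : E)⟫ + ⟪x, (ω : E)⟫ ^ 2 * t⁻¹ +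
      ‖x - ⟪x, ω⟫ • (ω : E)‖ ^ 2) atTop
      (𝓝 (2 * ⟪x, (ω : E)⟫ + ⟪x, (ω : E)⟫ ^ 2 * 0 + ‖x - ⟪x, ω⟫ • (ω : E)‖ ^ 2)) :=
    (tendsto_const_nhds.add (tendsto_inv_atTop_zero.const_mul _)).add tendsto_const_nhds
  have hlim := hnum.div (hnorm.add_const 1) (by norm_num)
  rw [show ∀ a b : ℝ, (2 * a + a ^ 2 * 0 + b) / (1 + 1) = a + b / 2 by intros; ring] at hlim
  refine hlim.congr' ?_
  filter_upwards [eventually_gt_atTop 0] with t ht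
  have hfactor := norm_sq_parabolicZoom ω ht.le x
  rw [Pi.div_apply, norm_smul, norm_inv, Real.norm_of_nonneg ht.le, div_eq_iff (by positivity)]
  field_simp
  linear_combination -hfactor

variable [FiniteDimensional ℝ E] [MeasurableSpace E] [BorelSpace E]

theorem integral_comp_parabolicZoom {k : ℕ} (hE : finrank ℝ E = 2 * k + 1)
    (ω : sphere (0 : E) 1) {t : ℝ} (ht : 0 < t) (g : E → ℝ) :
    t ^ k * ∫ x, g (parabolicZoom ω t x) = ∫ x, g x := by
  have hF := finrank_orthogonal_span_sphere hE ω
  have hsqrt : √t ≠ 0 := (Real.sqrt_pos.2 ht).ne'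
  let Φ : ℝ × (ℝ ∙ (ω : E))ᗮ ≃ₜ ℝ × (ℝ ∙ (ω : E))ᗮ :=
    (Homeomorph.addLeft t).prodCongr (Homeomorph.smulOfNeZero √t hsqrt)
  have hΦ : MeasurePreserving Φ (ENNReal.ofReal (t ^ k) • volume) volume := by
    have hmap : Measure.map (√t • · : (ℝ ∙ (ω : E))ᗮ → _) (ENNReal.ofReal (t ^ k) • volume) =
        volume := by
      rw [Measure.map_smul, Measure.map_addHaar_smul _ hsqrt, hF, pow_mul, Real.sq_sqrt ht.le,
        smul_smul, abs_of_pos (by positivity), ← ENNReal.ofReal_mul (by positivity),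
        mul_inv_cancel₀ (by positivity), ENNReal.ofReal_one, one_smul]
    rw [Measure.volume_eq_prod, ← Measure.prod_smul_right]
    exact (measurePreserving_add_left volume t).prod ⟨measurable_const_smul √t, hmap⟩
  rw [← integral_prod_orthogonal ω, ← integral_prod_orthogonal ω g,
    ← hΦ.integral_comp Φ.measurableEmbedding fun p ↦ g (p.1 • (ω : E) + p.2),
    integral_smul_measure, ENNReal.toReal_ofReal (by positivity), smul_eq_mul]
  simp only [parabolicZoom_smul_add_orthogonal]
  rfl

end ParabolicZoom

section UnitDirection

variable {E : Type*} [NormedAddCommGroup E] [NormedSpace ℝ E] [Nontrivial E]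

open Classical in
/-- The direction `x / ‖x‖` of a vector, as a point of the unit sphere; its value at `x = 0` is
arbitrary. -/
def unitDirection (x : E) : sphere (0 : E) 1 :=
  if hx : x = 0 then ⟨_, (NormedSpace.sphere_nonempty.2 zero_le_one).some_mem⟩
  else ⟨‖x‖⁻¹ • x, by simp [norm_smul, hx]⟩

theorem coe_unitDirection {x : E} (hx : x ≠ 0) : (unitDirection x : E) = ‖x‖⁻¹ • x := by
  rw [unitDirection, dif_neg hx]

theorem unitDirection_smul {c : ℝ} (hc : 0 < c) (x : E) :
    unitDirection (c • x) = unitDirection x := by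
  obtain rfl | hx := eq_or_ne x 0
  · rw [smul_zero]
  · ext1
    rw [coe_unitDirection hx, coe_unitDirection (smul_ne_zero hc.ne' hx), norm_smul, smul_smul,
      Real.norm_of_nonneg hc.le]
    congr 1
    field_simp

theorem unitDirection_coe (ω : sphere (0 : E) 1) : unitDirection (ω : E) = ω := by
  ext1
  rw [coe_unitDirection (ne_zero_of_mem_unit_sphere ω), norm_eq_of_mem_sphere, inv_one, one_smul]

theorem continuousAt_unitDirection {x : E} (hx : x ≠ 0) : ContinuousAt unitDirection x := by
  rw [Topology.IsInducing.subtypeVal.continuousAt_iff]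
  refine ((continuousAt_id.norm.inv₀ (norm_ne_zero_iff.2 hx)).smul continuousAt_id).congr ?_
  filter_upwards [eventually_ne_nhds hx] with y hy using (coe_unitDirection hy).symm

variable [MeasurableSpace E] [BorelSpace E]

theorem measurable_unitDirection : Measurable (unitDirection : E → sphere (0 : E) 1) :=
  measurable_of_continuousOn_compl_singleton 0 fun _ hx ↦
    (continuousAt_unitDirection hx).continuousWithinAt

theorem integral_inv_norm_pow_mul [FiniteDimensional ℝ E] {μ : Measure E} [μ.IsAddHaarMeasure]
    {n : ℕ} (hE : finrank ℝ E = n + 1) {G : sphere (0 : E) 1 → ℝ → ℝ} {t : ℝ}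
    (hG : ∀ ω s, s ≤ -t → G ω s = 0)
    (hint : Integrable (fun x ↦ (‖x‖ ^ n)⁻¹ * G (unitDirection x) (‖x‖ - t)) μ) :
    ∫ x, (‖x‖ ^ n)⁻¹ * G (unitDirection x) (‖x‖ - t) ∂μ =
      ∫ ω, (∫ s, G ω s) ∂μ.toSphere := by
  rw [integral_eq_integral_toSphere_Ioi hint, hE, Nat.add_sub_cancel]
  congr 1 with ω
  calc _ = ∫ ρ in Ioi (0 : ℝ), G ω (ρ - t) := by
        refine setIntegral_congr_fun measurableSet_Ioi fun ρ (hρ : 0 < ρ) ↦ ?_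
        simp only [norm_smul, norm_eq_of_mem_sphere ω, mul_one, Real.norm_of_nonneg hρ.le,
          unitDirection_smul hρ, unitDirection_coe, smul_eq_mul]
        rw [mul_inv_cancel_left₀ (by positivity)]
    _ = ∫ ρ, G ω (ρ - t) := setIntegral_eq_integral_of_forall_compl_eq_zero fun ρ hρ ↦
        hG ω _ (by linarith [notMem_Ioi.1 hρ])
    _ = ∫ s, G ω s := integral_sub_right_eq_self (G ω) t

end UnitDirection

section SphereProfile

variable {E : Type*} [NormedAddCommGroup E] [NormedSpace ℝ E] [FiniteDimensional ℝ E]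
  {D : sphere (0 : E) 1 → ℝ → ℝ} {r : ℝ}

theorem hasCompactSupport_uncurry (hDr : ∀ ω s, r < |s| → D ω s = 0) :
    HasCompactSupport D.uncurry :=
  .intro (isCompact_univ.prod (isCompact_closedBall (0 : ℝ) r)) fun p hp ↦
    hDr p.1 p.2 (by simpa using hp)

theorem exists_forall_abs_le (hD : Continuous D.uncurry) (hDr : ∀ ω s, r < |s| → D ω s = 0) :
    ∃ M, ∀ ω s, |D ω s| ≤ M :=
  ((hasCompactSupport_uncurry hDr).exists_bound_of_continuous hD).imp fun _ hM ω s ↦ hM (ω, s)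

variable [MeasurableSpace E] [BorelSpace E] {μ : Measure E} [μ.IsAddHaarMeasure]

theorem integral_toSphere_Ici_eq_half (hD : Continuous D.uncurry)
    (hDr : ∀ ω s, r < |s| → D ω s = 0) (hneg : ∀ ω s, D (-ω) (-s) = D ω s) :
    ∫ ω, (∫ s in Ici 0, D ω s) ∂μ.toSphere = (1 / 2) * ∫ ω, (∫ s, D ω s) ∂μ.toSphere := by
  have hint : Integrable D.uncurry (μ.toSphere.prod volume) :=
    hD.integrable_of_hasCompactSupport (hasCompactSupport_uncurry hDr)
  have hline (ω : sphere (0 : E) 1) : Integrable (D ω) :=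
    (hD.comp (Continuous.prodMk_right ω)).integrable_of_hasCompactSupport
      (.intro (isCompact_closedBall (0 : ℝ) r) fun s hs ↦ hDr ω s (by simpa using hs))
  have hhalf (S : Set ℝ) : Integrable (fun ω ↦ ∫ s in S, D ω s) μ.toSphere := by
    have : Integrable D.uncurry (μ.toSphere.prod (volume.restrict S)) := by
      rw [← Measure.restrict_univ (μ := μ.toSphere), Measure.prod_restrict]
      exact hint.integrableOn
    exact this.integral_prod_left
  have hreflect : ∫ ω, (∫ s in Iio 0, D ω s) ∂μ.toSphere =
      ∫ ω, (∫ s in Ici 0, D ω s) ∂μ.toSphere := by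
    refine (integral_toSphere_comp_neg _).symm.trans (integral_congr_ae (.of_forall fun ω ↦ ?_))
    have := integral_comp_neg_Ioi (0 : ℝ) (D (-ω))
    simp only [hneg, neg_zero] at this
    dsimp only
    rw [integral_Ici_eq_integral_Ioi, this, integral_Iic_eq_integral_Iio]
  have hsplit (ω : sphere (0 : E) 1) :
      ∫ s, D ω s = (∫ s in Ici 0, D ω s) + ∫ s in Iio 0, D ω s := by
    rw [← integral_add_compl measurableSet_Ici (hline ω), compl_Ici]
  simp_rw [hsplit]
  rw [integral_add (hhalf _) (hhalf _), hreflect]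
  ring

end SphereProfile

section RadiationField

variable {E : Type*} [NormedAddCommGroup E] [NormedSpace ℝ E] [Nontrivial E]
  {D : sphere (0 : E) 1 → ℝ → ℝ} {k : ℕ} {r t M : ℝ}

/-- The outgoing radial wave with radiation profile `D`: at time `t` it is a translate of `D`,
damped by the factor `‖x‖ ^ (-k)` appropriate to dimension `2 * k + 1`. -/
def radiationField (k : ℕ) (D : sphere (0 : E) 1 → ℝ → ℝ) (t : ℝ) (x : E) : ℝ :=
  (‖x‖ ^ k)⁻¹ * D (unitDirection x) (‖x‖ - t)

theorem radiationField_eq_zero (hDr : ∀ ω s, r < |s| → D ω s = 0) {x : E} (hx : r < |‖x‖ - t|) :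
    radiationField k D t x = 0 := by
  rw [radiationField, hDr _ _ hx, mul_zero]

theorem abs_radiationField_le (hDr : ∀ ω s, r < |s| → D ω s = 0) (hM : ∀ ω s, |D ω s| ≤ M)
    (hrt : r < t) (x : E) : |radiationField k D t x| ≤ ((t - r) ^ k)⁻¹ * M := by
  have htr : 0 < t - r := sub_pos.2 hrt
  have hM₀ : 0 ≤ M := (abs_nonneg _).trans (hM (unitDirection x) 0)
  obtain hx | hx := lt_or_ge r |‖x‖ - t|
  · rw [radiationField_eq_zero hDr hx, abs_zero]
    positivity
  · have hnorm : t - r ≤ ‖x‖ := by linarith [(abs_le.1 hx).1]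
    rw [radiationField, abs_mul, abs_of_nonneg (by positivity)]
    gcongr
    exact hM _ _

variable [MeasurableSpace E] [BorelSpace E]

theorem measurable_radiationField (hD : Continuous D.uncurry) :
    Measurable (radiationField k D t) :=
  (measurable_norm.pow_const k).inv.mul
    (hD.measurable.comp (measurable_unitDirection.prodMk (measurable_norm.sub_const t)))

variable [FiniteDimensional ℝ E] {μ : Measure E} [μ.IsAddHaarMeasure]

theorem integrable_radiationField (hD : Continuous D.uncurry)
    (hDr : ∀ ω s, r < |s| → D ω s = 0) (hrt : r < t) : Integrable (radiationField k D t) μ := by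
  obtain ⟨M, hM⟩ := exists_forall_abs_le hD hDr
  refine IntegrableOn.integrable_of_forall_notMem_eq_zero (s := closedBall 0 (t + r))
    (Measure.integrableOn_of_bounded measure_closedBall_lt_top.ne
      (measurable_radiationField hD).aestronglyMeasurable
      (.of_forall (abs_radiationField_le hDr hM hrt))) fun x hx ↦ radiationField_eq_zero hDr ?_
  rw [mem_closedBall_zero_iff, not_le] at hx
  exact lt_abs.2 (.inl (by linarith))

theorem integrable_radiationField_sq (hD : Continuous D.uncurry)
    (hDr : ∀ ω s, r < |s| → D ω s = 0) (hrt : r < t) :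
    Integrable (fun x ↦ radiationField k D t x ^ 2) μ := by
  obtain ⟨M, hM⟩ := exists_forall_abs_le hD hDr
  simp only [pow_two]
  exact (integrable_radiationField hD hDr hrt).bdd_mul
    (measurable_radiationField hD).aestronglyMeasurable
    (.of_forall (abs_radiationField_le hDr hM hrt))

theorem setIntegral_radiationField_sq (hE : finrank ℝ E = 2 * k + 1) (hD : Continuous D.uncurry)
    (hDr : ∀ ω s, r < |s| → D ω s = 0) (hrt : r < t) {S : Set ℝ} (hS : MeasurableSet S) :
    ∫ x in {x : E | ‖x‖ - t ∈ S}, radiationField k D t x ^ 2 ∂μ =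
      ∫ ω, (∫ s in S, D ω s ^ 2) ∂μ.toSphere := by
  have hmeas : MeasurableSet {x : E | ‖x‖ - t ∈ S} := (measurable_norm.sub_const t) hS
  have hfun : {x : E | ‖x‖ - t ∈ S}.indicator (fun x ↦ radiationField k D t x ^ 2) = fun x ↦
      (‖x‖ ^ (2 * k))⁻¹ * S.indicator (fun s ↦ D (unitDirection x) s ^ 2) (‖x‖ - t) := by
    ext x
    simp only [indicator, mem_ofPred_eq, radiationField]
    split_ifs <;> ring
  have hint := (integrable_radiationField_sq (k := k) (μ := μ) hD hDr hrt).indicator hmeas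
  rw [hfun] at hint
  rw [← integral_indicator hmeas, hfun]
  simp only [← integral_indicator hS]
  refine integral_inv_norm_pow_mul hE (G := fun ω ↦ S.indicator fun s ↦ D ω s ^ 2)
    (fun ω s hs ↦ ?_) hint
  simp [hDr ω s (lt_abs.2 (.inr (by linarith)))]

end RadiationField

section ZoomSupport

variable {E : Type*} [NormedAddCommGroup E] [InnerProductSpace ℝ E] {r t : ℝ}
  {ω : sphere (0 : E) 1} {x : E}

theorem norm_le_of_abs_norm_parabolicZoom_sub_le (ht : 0 < t) (hrt : 2 * r ≤ t)
    (hx : |⟪x, (ω : E)⟫| ≤ r) (hP : |‖parabolicZoom ω t x‖ - t| ≤ r) : ‖x‖ ≤ r + 3 := by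
  have hr : 0 ≤ r := (abs_nonneg _).trans hx
  set z := x - ⟪x, (ω : E)⟫ • (ω : E)
  have hsq := norm_sq_parabolicZoom ω ht.le x
  have hz_le : t * ‖z‖ ^ 2 ≤ t * (6 * r) := by
    nlinarith [abs_le.1 hx, abs_le.1 hP]
  have hz_le' := le_of_mul_le_mul_left hz_le ht
  have hx_sq : ⟪x, (ω : E)⟫ ^ 2 ≤ r ^ 2 := sq_le_sq' (abs_le.1 hx).1 (abs_le.1 hx).2
  refine le_of_sq_le_sq ?_ (by positivity)
  rw [norm_sq_eq_inner_sq_add ω]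
  nlinarith

theorem norm_le_of_abs_inner_add_le (hx : |⟪x, (ω : E)⟫| ≤ r)
    (hP : |⟪x, (ω : E)⟫ + ‖x - ⟪x, (ω : E)⟫ • (ω : E)‖ ^ 2 / 2| ≤ r) : ‖x‖ ≤ r + 3 := by
  have hr : 0 ≤ r := (abs_nonneg _).trans hx
  have hx_sq : ⟪x, (ω : E)⟫ ^ 2 ≤ r ^ 2 := sq_le_sq' (abs_le.1 hx).1 (abs_le.1 hx).2
  refine le_of_sq_le_sq ?_ (by positivity)
  rw [norm_sq_eq_inner_sq_add ω]
  linarith [abs_le.1 hx, abs_le.1 hP]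

end ZoomSupport

section Paraboloid

variable {E : Type*} [NormedAddCommGroup E] [InnerProductSpace ℝ E] [FiniteDimensional ℝ E]
  [MeasurableSpace E] [BorelSpace E] {D f : sphere (0 : E) 1 → ℝ → ℝ} {r : ℝ}

theorem integral_prod_paraboloid (hD : Continuous D.uncurry)
    (hDr : ∀ ω s, r < |s| → D ω s = 0) (hf : Continuous f.uncurry)
    (hfr : ∀ ω s, r < |s| → f ω s = 0) :
    ∫ p : sphere (0 : E) 1 × E, D p.1 (⟪p.2, (p.1 : E)⟫ +
        ‖p.2 - ⟪p.2, (p.1 : E)⟫ • (p.1 : E)‖ ^ 2 / 2) * f p.1 ⟪p.2, (p.1 : E)⟫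
        ∂(volume.toSphere.prod volume) =
      ∫ ω, (∫ p : ℝ × (ℝ ∙ (ω : E))ᗮ, D ω (p.1 + ‖p.2‖ ^ 2 / 2) * f ω p.1)
        ∂volume.toSphere := by
  have hcont : Continuous fun p : sphere (0 : E) 1 × E ↦ D p.1 (⟪p.2, (p.1 : E)⟫ +
      ‖p.2 - ⟪p.2, (p.1 : E)⟫ • (p.1 : E)‖ ^ 2 / 2) * f p.1 ⟪p.2, (p.1 : E)⟫ :=
    (hD.comp (continuous_fst.prodMk (by fun_prop))).mul
      (hf.comp (continuous_fst.prodMk (by fun_prop)))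
  have hsupp : HasCompactSupport fun p : sphere (0 : E) 1 × E ↦ D p.1 (⟪p.2, (p.1 : E)⟫ +
      ‖p.2 - ⟪p.2, (p.1 : E)⟫ • (p.1 : E)‖ ^ 2 / 2) * f p.1 ⟪p.2, (p.1 : E)⟫ := by
    refine .intro (isCompact_univ.prod (isCompact_closedBall (0 : E) (r + 3))) fun p hp ↦ ?_
    contrapose! hp
    rw [mul_ne_zero_iff] at hp
    have hx := not_lt.1 (mt (hfr _ _) hp.2)
    have hP := not_lt.1 (mt (hDr _ _) hp.1)
    exact ⟨mem_univ _, mem_closedBall_zero_iff.2 (norm_le_of_abs_inner_add_le hx hP)⟩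
  rw [integral_prod _ (hcont.integrable_of_hasCompactSupport hsupp)]
  congr 1 with ω
  rw [← integral_prod_orthogonal ω]
  simp [inner_smul_add_orthogonal]

theorem integrable_indicator_closedBall_snd (r C : ℝ) :
    Integrable (fun p : sphere (0 : E) 1 × E ↦
      (closedBall (0 : E) r).indicator (fun _ ↦ C) p.2)
      ((volume : Measure E).toSphere.prod volume) :=
  ((integrable_indicator_iff measurableSet_closedBall).2
    (integrableOn_const measure_closedBall_lt_top.ne)).comp_snd _

end Paraboloid

section RadiationPairing

variable {E : Type*} [NormedAddCommGroup E] [InnerProductSpace ℝ E]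

theorem abs_planeWavePhase_one_neg_le (ω θ : sphere (0 : E) 1) :
    |planeWavePhase (ω : E) (1, -(θ : E))| ≤ 2 := by
  have := abs_real_inner_le_norm (θ : E) ω
  rw [norm_eq_of_mem_sphere, norm_eq_of_mem_sphere, mul_one] at this
  rw [planeWavePhase_apply, inner_neg_left, abs_le]
  constructor <;> linarith [abs_le.1 this]

variable [Nontrivial E] {D f : sphere (0 : E) 1 → ℝ → ℝ} {k : ℕ} {r t M N : ℝ}

/-- The contribution of the plane wave in direction `ω` with density `f` to the energy pairing of
a superposition of plane waves with the outgoing radial wave of profile `D`, whose space-time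
gradient is asymptotically in the direction `(1, -x / ‖x‖)`. -/
def radiationPairing (k : ℕ) (D f : sphere (0 : E) 1 → ℝ → ℝ) (t : ℝ) (ω : sphere (0 : E) 1)
    (x : E) : ℝ :=
  radiationField k D t x *
    (f ω (planeWavePhase (ω : E) (t, x)) * planeWavePhase (ω : E) (1, -(unitDirection x : E)))

theorem abs_pow_mul_radiationPairing_parabolicZoom_le (hDr : ∀ ω s, r < |s| → D ω s = 0)
    (hfr : ∀ ω s, r < |s| → f ω s = 0) (hM : ∀ ω s, |D ω s| ≤ M) (hN : ∀ ω s, |f ω s| ≤ N)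
    (ht : 0 < t) (hrt : 2 * r ≤ t) (ω : sphere (0 : E) 1) (x : E) :
    |t ^ k * radiationPairing k D f t ω (parabolicZoom ω t x)| ≤
      (closedBall (0 : E) (r + 3)).indicator (fun _ ↦ 2 ^ k * M * (N * 2)) x := by
  have hM₀ : 0 ≤ M := (abs_nonneg _).trans (hM ω 0)
  have hN₀ : 0 ≤ N := (abs_nonneg _).trans (hN ω 0)
  have hbound : 0 ≤ (closedBall (0 : E) (r + 3)).indicator (fun _ ↦ 2 ^ k * M * (N * 2)) x :=
    indicator_nonneg (fun _ _ ↦ by positivity) x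
  rw [radiationPairing, planeWavePhase_apply, inner_parabolicZoom, add_sub_cancel_left]
  obtain hx | hx := lt_or_ge r |⟪x, (ω : E)⟫|
  · simpa [hfr ω _ hx] using hbound
  obtain hP | hP := lt_or_ge r |‖parabolicZoom ω t x‖ - t|
  · simpa [radiationField_eq_zero hDr hP] using hbound
  have hball : x ∈ closedBall (0 : E) (r + 3) :=
    mem_closedBall_zero_iff.2 (norm_le_of_abs_norm_parabolicZoom_sub_le ht hrt hx hP)
  have hnorm : t / 2 ≤ ‖parabolicZoom ω t x‖ := by linarith [(abs_le.1 hP).1]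
  have hdecay : t ^ k * (‖parabolicZoom ω t x‖ ^ k)⁻¹ ≤ 2 ^ k := by
    rw [← inv_pow, ← mul_pow]
    gcongr
    rw [← div_eq_mul_inv, div_le_iff₀ (by linarith)]
    linarith
  rw [indicator_of_mem hball, radiationField, ← mul_assoc (t ^ k), ← mul_assoc (t ^ k), abs_mul,
    abs_mul _ (D _ _),
    abs_of_nonneg (by positivity : 0 ≤ t ^ k * (‖parabolicZoom ω t x‖ ^ k)⁻¹), abs_mul]
  gcongr
  exacts [hM _ _, hN _ _, abs_planeWavePhase_one_neg_le _ _]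

theorem tendsto_pow_mul_radiationPairing_parabolicZoom (hD : Continuous D.uncurry)
    (ω : sphere (0 : E) 1) (x : E) :
    Tendsto (fun t ↦ t ^ k * radiationPairing k D f t ω (parabolicZoom ω t x)) atTop
      (𝓝 (-2 * (D ω (⟪x, (ω : E)⟫ + ‖x - ⟪x, (ω : E)⟫ • (ω : E)‖ ^ 2 / 2) *
        f ω ⟪x, (ω : E)⟫))) := by
  have hω : (ω : E) ≠ 0 := ne_zero_of_mem_unit_sphere ω
  have hscaled := tendsto_inv_smul_parabolicZoom ω x
  have hdir : Tendsto (fun t ↦ unitDirection (parabolicZoom ω t x)) atTop (𝓝 ω) := by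
    have := (continuousAt_unitDirection hω).tendsto.comp hscaled
    rw [unitDirection_coe] at this
    refine this.congr' ?_
    filter_upwards [eventually_gt_atTop 0] with t ht using unitDirection_smul (inv_pos.2 ht) _
  have hpow : Tendsto (fun t ↦ t ^ k * (‖parabolicZoom ω t x‖ ^ k)⁻¹) atTop (𝓝 1) := by
    have := (hscaled.norm.inv₀ (norm_ne_zero_iff.2 hω)).pow k
    rw [norm_eq_of_mem_sphere ω, inv_one, one_pow] at this
    refine this.congr' ?_
    filter_upwards [eventually_gt_atTop 0] with t ht
    rw [norm_smul, norm_inv, Real.norm_of_nonneg ht.le, mul_inv, inv_inv, mul_pow, inv_pow]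
  have hprofile : Tendsto (fun t ↦ D (unitDirection (parabolicZoom ω t x))
      (‖parabolicZoom ω t x‖ - t)) atTop
      (𝓝 (D ω (⟪x, (ω : E)⟫ + ‖x - ⟪x, (ω : E)⟫ • (ω : E)‖ ^ 2 / 2))) :=
    (hD.tendsto _).comp (hdir.prodMk_nhds (tendsto_norm_parabolicZoom_sub ω x))
  have hphase : Tendsto (fun t ↦ planeWavePhase (ω : E)
      (1, -(unitDirection (parabolicZoom ω t x) : E))) atTop (𝓝 (-2)) := by
    have hval : Tendsto (fun t ↦ (unitDirection (parabolicZoom ω t x) : E)) atTop (𝓝 ω) :=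
      (continuous_subtype_val.tendsto ω).comp hdir
    have hlim := (hval.neg.inner (𝕜 := ℝ) (tendsto_const_nhds (x := (ω : E)))).sub_const 1
    rw [inner_neg_left, real_inner_self_eq_norm_sq, norm_eq_of_mem_sphere ω,
      show -(1 : ℝ) ^ 2 - 1 = -2 by norm_num] at hlim
    simpa only [planeWavePhase_apply] using hlim
  convert! (hpow.mul hprofile).mul (hphase.const_mul (f ω ⟪x, (ω : E)⟫)) using 2 with t
  · rw [radiationPairing, radiationField, planeWavePhase_apply ω.1 (t, _), inner_parabolicZoom,
      add_sub_cancel_left]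
    ring
  · ring

variable [FiniteDimensional ℝ E] [MeasurableSpace E] [BorelSpace E]

theorem measurable_radiationPairing (hD : Continuous D.uncurry) (hf : Continuous f.uncurry) :
    Measurable (radiationPairing k D f t).uncurry := by
  simp only [Function.uncurry_def, radiationPairing, planeWavePhase_apply]
  have hdir : Measurable fun p : sphere (0 : E) 1 × E ↦ (unitDirection p.2 : E) :=
    measurable_subtype_coe.comp (measurable_unitDirection.comp measurable_snd)
  have hω : Measurable fun p : sphere (0 : E) 1 × E ↦ (p.1 : E) :=
    measurable_subtype_coe.comp measurable_fst
  exact ((measurable_radiationField hD).comp measurable_snd).mul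
    ((hf.measurable.comp (measurable_fst.prodMk ((measurable_snd.inner hω).sub_const t))).mul
      ((hdir.neg.inner hω).sub_const 1))

theorem integrable_radiationPairing (hD : Continuous D.uncurry)
    (hDr : ∀ ω s, r < |s| → D ω s = 0) (hf : Continuous f.uncurry) (hN : ∀ ω s, |f ω s| ≤ N)
    (hrt : r < t) :
    Integrable (radiationPairing k D f t).uncurry ((volume : Measure E).toSphere.prod volume) := by
  refine (((integrable_radiationField (k := k) hD hDr hrt).comp_snd _).norm.mul_const (N * 2)).mono'
    (measurable_radiationPairing hD hf).aestronglyMeasurable (.of_forall fun p ↦ ?_)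
  have hN₀ : 0 ≤ N := (abs_nonneg _).trans (hN p.1 0)
  simp only [Function.uncurry_def, radiationPairing, norm_mul]
  gcongr
  exacts [hN _ _, abs_planeWavePhase_one_neg_le _ _]

theorem measurable_radiationPairing_parabolicZoom (hD : Continuous D.uncurry)
    (hf : Continuous f.uncurry) :
    Measurable fun p : sphere (0 : E) 1 × E ↦
      t ^ k * radiationPairing k D f t p.1 (parabolicZoom p.1 t p.2) :=
  ((measurable_radiationPairing hD hf).comp
    (measurable_fst.prodMk (continuous_parabolicZoom t).measurable)).const_mul _

theorem integral_radiationField_mul_planeWave (hE : finrank ℝ E = 2 * k + 1)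
    (hD : Continuous D.uncurry) (hDr : ∀ ω s, r < |s| → D ω s = 0) (hf : Continuous f.uncurry)
    (hfr : ∀ ω s, r < |s| → f ω s = 0) (ht : 0 < t) (hrt : 2 * r ≤ t) :
    ∫ x, radiationField k D t x * planeWave (fun ω s ↦ f ω s *
        planeWavePhase (ω : E) (1, -(unitDirection x : E))) (t, x) =
      ∫ p : sphere (0 : E) 1 × E, t ^ k * radiationPairing k D f t p.1 (parabolicZoom p.1 t p.2)
        ∂(volume.toSphere.prod volume) := by
  obtain ⟨M, hM⟩ := exists_forall_abs_le hD hDr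
  obtain ⟨N, hN⟩ := exists_forall_abs_le hf hfr
  calc _ = ∫ x, (∫ ω, radiationPairing k D f t ω x ∂volume.toSphere) := by
        simp only [planeWave, ← integral_const_mul, radiationPairing]
    _ = ∫ ω, (∫ x, radiationPairing k D f t ω x) ∂volume.toSphere :=
        (integral_integral_swap
          (integrable_radiationPairing hD hDr hf hN (by linarith : r < t))).symm
    _ = ∫ ω, (∫ x, t ^ k * radiationPairing k D f t ω (parabolicZoom ω t x))
          ∂volume.toSphere := by
        simp only [integral_const_mul, integral_comp_parabolicZoom hE _ ht]
    _ = _ := (integral_prod (fun p : sphere (0 : E) 1 × E ↦ t ^ k * radiationPairing k D f t p.1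
        (parabolicZoom p.1 t p.2)) ((integrable_indicator_closedBall_snd _ _).mono'
        (measurable_radiationPairing_parabolicZoom hD hf).aestronglyMeasurable
        (.of_forall fun p ↦ abs_pow_mul_radiationPairing_parabolicZoom_le hDr hfr hM hN ht hrt
          p.1 p.2))).symm

theorem tendsto_integral_radiationField_mul_planeWave (hE : finrank ℝ E = 2 * k + 1)
    (hD : Continuous D.uncurry) (hDr : ∀ ω s, r < |s| → D ω s = 0) (hf : Continuous f.uncurry)
    (hfr : ∀ ω s, r < |s| → f ω s = 0) :
    Tendsto (fun t ↦ ∫ x, radiationField k D t x * planeWave (fun ω s ↦ f ω s *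
      planeWavePhase (ω : E) (1, -(unitDirection x : E))) (t, x)) atTop
      (𝓝 (-2 * ∫ ω, (∫ p : ℝ × (ℝ ∙ (ω : E))ᗮ, D ω (p.1 + ‖p.2‖ ^ 2 / 2) * f ω p.1)
        ∂volume.toSphere)) := by
  obtain ⟨M, hM⟩ := exists_forall_abs_le hD hDr
  obtain ⟨N, hN⟩ := exists_forall_abs_le hf hfr
  have hlarge : ∀ᶠ t in atTop, 0 < t ∧ 2 * r ≤ t :=
    (eventually_gt_atTop 0).and (eventually_ge_atTop _)
  rw [← integral_prod_paraboloid hD hDr hf hfr, ← integral_const_mul]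
  refine (tendsto_integral_filter_of_dominated_convergence _
    (.of_forall fun t ↦ (measurable_radiationPairing_parabolicZoom (k := k) hD
      hf).aestronglyMeasurable)
    (hlarge.mono fun t ht ↦ .of_forall fun p ↦
      abs_pow_mul_radiationPairing_parabolicZoom_le hDr hfr hM hN ht.1 ht.2 p.1 p.2)
    (integrable_indicator_closedBall_snd _ _)
    (.of_forall fun p ↦ tendsto_pow_mul_radiationPairing_parabolicZoom hD p.1 p.2)).congr' ?_
  exact hlarge.mono fun t ht ↦
    (integral_radiationField_mul_planeWave hE hD hDr hf hfr ht.1 ht.2).symm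

end RadiationPairing

section ParaboloidIntegral

variable {g : ℝ → ℝ} {F : Type*} [NormedAddCommGroup F] [InnerProductSpace ℝ F]
  [FiniteDimensional ℝ F]

theorem hasCompactSupport_comp_add_norm_sq_mul {f g : ℝ → ℝ} (hg : HasCompactSupport g)
    (hf : HasCompactSupport f) :
    HasCompactSupport fun p : ℝ × F ↦ g (p.1 + ‖p.2‖ ^ 2 / 2) * f p.1 := by
  obtain ⟨a, ha⟩ := hg.isBounded.subset_closedBall 0
  obtain ⟨b, hb⟩ := hf.isBounded.subset_closedBall 0
  refine .intro ((isCompact_closedBall (0 : ℝ) b).prod (isCompact_closedBall (0 : F) (a + b + 1)))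
    fun p hp ↦ ?_
  contrapose! hp
  rw [mul_ne_zero_iff] at hp
  have hs := hb (subset_tsupport _ hp.2)
  have hz := ha (subset_tsupport _ hp.1)
  refine ⟨hs, ?_⟩
  rw [mem_closedBall_zero_iff, Real.norm_eq_abs, abs_le] at hs hz
  rw [mem_closedBall_zero_iff]
  nlinarith [sq_nonneg (‖p.2‖ - 1)]

theorem integral_iteratedDeriv_add_norm_sq_mul_iteratedDeriv [MeasurableSpace F] [BorelSpace F]
    {k : ℕ} (hF : finrank ℝ F = 2 * k) (hg : ContDiff ℝ (⊤ : ℕ∞) g) (hgc : HasCompactSupport g) :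
    ∫ p : ℝ × F, iteratedDeriv (k + 1) g (p.1 + ‖p.2‖ ^ 2 / 2) * iteratedDeriv (2 * k + 1) g p.1 =
      (2 * Real.pi) ^ k * ∫ s, iteratedDeriv (k + 1) g s ^ 2 := by
  have hcont (j : ℕ) : Continuous (iteratedDeriv j g) :=
    hg.continuous_iteratedDeriv j (by exact_mod_cast le_top)
  have hint : Integrable (fun p : ℝ × F ↦ iteratedDeriv (k + 1) g (p.1 + ‖p.2‖ ^ 2 / 2) *
      iteratedDeriv (2 * k + 1) g p.1) (volume.prod volume) :=
    (((hcont _).comp (by fun_prop)).mul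
      ((hcont _).comp continuous_fst)).integrable_of_hasCompactSupport
      (hasCompactSupport_comp_add_norm_sq_mul (hasCompactSupport_iteratedDeriv hgc _)
        (hasCompactSupport_iteratedDeriv hgc _))
  have hfiber (s : ℝ) : ∫ z : F, iteratedDeriv (k + 1) g (s + ‖z‖ ^ 2 / 2) =
      (-(2 * Real.pi)) ^ k * iteratedDeriv 1 g s := by
    rw [iteratedDeriv_succ', iteratedDeriv_one]
    exact integral_iteratedDeriv_add_norm_sq hF (contDiff_infty_iff_deriv.1 hg).2 hgc.deriv s
  calc _ = ∫ s, (-(2 * Real.pi)) ^ k * (iteratedDeriv (k + 1 + k) g s * iteratedDeriv 1 g s) := by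
        rw [Measure.volume_eq_prod, integral_prod _ hint]
        congr 1 with s
        dsimp only
        rw [integral_mul_const, hfiber, show k + 1 + k = 2 * k + 1 by ring]
        ring
    _ = _ := by
        rw [integral_const_mul, integral_iteratedDeriv_mul_iteratedDeriv hg hg hgc, ← mul_assoc,
          ← mul_pow, add_comm 1 k]
        simp [pow_two]

end ParaboloidIntegral

section RadiationProfile

variable {E : Type*} [NormedAddCommGroup E] [InnerProductSpace ℝ E] [FiniteDimensional ℝ E]
  [MeasurableSpace E] [BorelSpace E] {k : ℕ} {u : E → ℝ}

/-- The Friedlander radiation profile of the wave with initial data `(u, 0)` in dimension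
`2 * k + 1`. -/
def radiationProfile (k : ℕ) (u : E → ℝ) (ω : sphere (0 : E) 1) (s : ℝ) : ℝ :=
  -(2 * (-(2 * Real.pi)) ^ k)⁻¹ * iteratedDeriv (k + 1) (radonTransform u ω) s

theorem continuous_radiationProfile (hu : ContDiff ℝ (⊤ : ℕ∞) u) (huc : HasCompactSupport u) :
    Continuous (radiationProfile k u).uncurry :=
  continuous_const.mul (continuous_iteratedDeriv_radonTransform hu huc (k + 1))

theorem radiationProfile_eq_zero {r : ℝ} (hur : ∀ x, r < ‖x‖ → u x = 0) (ω : sphere (0 : E) 1)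
    (s : ℝ) (hs : r < |s|) : radiationProfile k u ω s = 0 := by
  rw [radiationProfile, iteratedDeriv_radonTransform_eq_zero hur _ ω hs, mul_zero]

theorem radiationProfile_neg_neg_sq (ω : sphere (0 : E) 1) (s : ℝ) :
    radiationProfile k u (-ω) (-s) ^ 2 = radiationProfile k u ω s ^ 2 := by
  rw [radiationProfile, iteratedDeriv_radonTransform_neg_neg, radiationProfile, mul_left_comm,
    mul_pow ((-1) ^ _), ← pow_mul, mul_comm _ 2, pow_mul, neg_one_sq, one_pow, one_mul]

theorem integral_radiationProfile_sq (hE : finrank ℝ E = 2 * k + 1) (hu : ContDiff ℝ (⊤ : ℕ∞) u)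
    (huc : HasCompactSupport u) :
    ∫ ω, (∫ s, radiationProfile k u ω s ^ 2) ∂volume.toSphere =
      (1 / 2) * ∫ x, ‖gradient u x‖ ^ 2 := by
  simp only [radiationProfile, mul_pow, integral_const_mul]
  rw [integral_integral_iteratedDeriv_radonTransform_sq hE hu huc, neg_sq, inv_pow, mul_pow,
    ← pow_mul, mul_comm k 2, (even_two_mul k).neg_pow]
  field_simp

theorem integral_radiationProfile_mul_radonDensity (hE : finrank ℝ E = 2 * k + 1)
    (hu : ContDiff ℝ (⊤ : ℕ∞) u) (huc : HasCompactSupport u) :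
    ∫ ω, (∫ p : ℝ × (ℝ ∙ (ω : E))ᗮ, radiationProfile k u ω (p.1 + ‖p.2‖ ^ 2 / 2) *
        radonDensity k (2 * k + 1) u ω p.1) ∂volume.toSphere =
      -(1 / 2) * ∫ x, ‖gradient u x‖ ^ 2 := by
  have hslice (ω : sphere (0 : E) 1) :
      ∫ p : ℝ × (ℝ ∙ (ω : E))ᗮ, radiationProfile k u ω (p.1 + ‖p.2‖ ^ 2 / 2) *
          radonDensity k (2 * k + 1) u ω p.1 =
        -(2 * (-(2 * Real.pi)) ^ k)⁻¹ * radonInversionConst k * ((2 * Real.pi) ^ k *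
          ∫ s, iteratedDeriv (k + 1) (radonTransform u ω) s ^ 2) := by
    rw [← integral_iteratedDeriv_add_norm_sq_mul_iteratedDeriv (finrank_orthogonal_span_sphere hE ω)
      (contDiff_radonTransform hu huc ω) (hasCompactSupport_radonTransform huc ω),
      ← integral_const_mul]
    simp only [radiationProfile, radonDensity]
    congr 1 with p
    ring
  simp only [hslice, integral_const_mul]
  rw [integral_integral_iteratedDeriv_radonTransform_sq hE hu huc, radonInversionConst,
    neg_pow (2 * Real.pi)]
  have hsign : ((-1 : ℝ) ^ k) ^ 2 = 1 := by rw [← pow_mul, mul_comm, pow_mul, neg_one_sq, one_pow]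
  field_simp
  rw [hsign]
  ring

end RadiationProfile

section MeanSquareConvergence

variable {α ι G : Type*} [MeasurableSpace α] {μ : Measure α} [NormedAddCommGroup G]

theorem lpNorm_two_eq_sqrt {f : α → G} (hf : AEStronglyMeasurable f μ) :
    lpNorm f 2 μ = √(∫ x, ‖f x‖ ^ 2 ∂μ) := by
  rw [lpNorm_eq_integral_norm_rpow_toReal two_ne_zero ENNReal.ofNat_ne_top hf, Real.sqrt_eq_rpow]
  norm_num

theorem lpNorm_two_sq {f : α → G} (hf : AEStronglyMeasurable f μ) :
    lpNorm f 2 μ ^ 2 = ∫ x, ‖f x‖ ^ 2 ∂μ := by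
  rw [lpNorm_two_eq_sqrt hf, Real.sq_sqrt (integral_nonneg fun x ↦ sq_nonneg _)]

theorem abs_lpNorm_sub_lpNorm_le {p : ENNReal} {f g : α → G} (hf : MemLp f p μ) (hg : MemLp g p μ)
    (hp : 1 ≤ p) : |lpNorm f p μ - lpNorm g p μ| ≤ lpNorm (f - g) p μ :=
  abs_sub_le_iff.2 ⟨by linarith [lpNorm_le_lpNorm_add_lpNorm_sub' (f := f) hg hp],
    by linarith [lpNorm_le_lpNorm_add_lpNorm_sub (f := g) hf hp]⟩

theorem tendsto_setIntegral_norm_sq_of_tendsto_integral_norm_sub_sq {l : Filter ι}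
    {S : ι → Set α} {f g : ι → α → G} {L : ℝ}
    (hf : ∀ᶠ i in l, MemLp (f i) 2 μ) (hg : ∀ᶠ i in l, MemLp (g i) 2 μ)
    (hfg : Tendsto (fun i ↦ ∫ x, ‖f i x - g i x‖ ^ 2 ∂μ) l (𝓝 0))
    (hL : Tendsto (fun i ↦ ∫ x in S i, ‖g i x‖ ^ 2 ∂μ) l (𝓝 L)) :
    Tendsto (fun i ↦ ∫ x in S i, ‖f i x‖ ^ 2 ∂μ) l (𝓝 L) := by
  set n : (α → G) → ι → ℝ := fun h i ↦ lpNorm h 2 (μ.restrict (S i))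
  have hdiff : Tendsto (fun i ↦ n (f i) i - n (g i) i) l (𝓝 0) := by
    have hsqrt := hfg.sqrt
    rw [Real.sqrt_zero] at hsqrt
    refine squeeze_zero_norm' ?_ hsqrt
    filter_upwards [hf, hg] with i hfi hgi
    refine (abs_lpNorm_sub_lpNorm_le (hfi.restrict _) (hgi.restrict _) one_le_two).trans ?_
    rw [lpNorm_two_eq_sqrt (hfi.sub hgi).1.restrict]
    exact Real.sqrt_le_sqrt (setIntegral_le_integral
      ((hfi.sub hgi).integrable_norm_pow two_ne_zero) (.of_forall fun x ↦ sq_nonneg _))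
  have hg_lim : Tendsto (fun i ↦ n (g i) i) l (𝓝 √L) :=
    hL.sqrt.congr' (hg.mono fun i hgi ↦ (lpNorm_two_eq_sqrt hgi.1.restrict).symm)
  have hlim := ((hdiff.pow 2).add ((hdiff.mul hg_lim).const_mul 2)).add hL
  rw [zero_pow two_ne_zero, zero_mul, mul_zero, zero_add, zero_add] at hlim
  refine hlim.congr' ?_
  filter_upwards [hf, hg] with i hfi hgi
  rw [← lpNorm_two_sq hfi.1.restrict, ← lpNorm_two_sq hgi.1.restrict]
  ring

theorem integral_norm_sub_sq [InnerProductSpace ℝ G] {f g : α → G} (hf : MemLp f 2 μ)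
    (hg : MemLp g 2 μ) :
    ∫ x, ‖f x - g x‖ ^ 2 ∂μ =
      ∫ x, ‖f x‖ ^ 2 ∂μ - 2 * ∫ x, ⟪f x, g x⟫ ∂μ + ∫ x, ‖g x‖ ^ 2 ∂μ := by
  have hinner : Integrable (fun x ↦ ⟪f x, g x⟫) μ :=
    (hf.norm.integrable_mul hg.norm).mono' (hf.1.inner hg.1)
      (.of_forall fun x ↦ norm_inner_le_norm (f x) (g x))
  have hf₂ := hf.integrable_norm_pow two_ne_zero
  simp only [norm_sub_sq_real]
  rw [integral_add (hf₂.sub' (hinner.const_mul 2)) (hg.integrable_norm_pow two_ne_zero),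
    integral_sub hf₂ (hinner.const_mul 2), integral_const_mul]

theorem tendsto_integral_norm_sub_sq_of_tendsto_integral_inner [InnerProductSpace ℝ G]
    {l : Filter ι} {f g : ι → α → G} {A : ℝ} (hf : ∀ᶠ i in l, MemLp (f i) 2 μ)
    (hg : ∀ᶠ i in l, MemLp (g i) 2 μ) (hfA : ∀ᶠ i in l, ∫ x, ‖f i x‖ ^ 2 ∂μ ≤ A)
    (hgA : ∀ᶠ i in l, ∫ x, ‖g i x‖ ^ 2 ∂μ ≤ A)
    (hfg : Tendsto (fun i ↦ ∫ x, ⟪f i x, g i x⟫ ∂μ) l (𝓝 A)) :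
    Tendsto (fun i ↦ ∫ x, ‖f i x - g i x‖ ^ 2 ∂μ) l (𝓝 0) := by
  have hbound : Tendsto (fun i ↦ 2 * A - 2 * ∫ x, ⟪f i x, g i x⟫ ∂μ) l (𝓝 0) :=
    sub_self (2 * A) ▸ (hfg.const_mul 2).const_sub (2 * A)
  refine squeeze_zero' (.of_forall fun i ↦ integral_nonneg fun x ↦ sq_nonneg _) ?_ hbound
  filter_upwards [hf, hg, hfA, hgA] with i hfi hgi hfAi hgAi
  rw [integral_norm_sub_sq hfi hgi]
  linarith

end MeanSquareConvergence

section RadiationGradient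

variable {E : Type*} [NormedAddCommGroup E] [InnerProductSpace ℝ E] [FiniteDimensional ℝ E]
  [Nontrivial E] [MeasurableSpace E] [BorelSpace E] {k : ℕ} {u : E → ℝ} {r t : ℝ}

/-- The leading part at time `t` of the space-time gradient of the wave with initial data `(u, 0)`
in dimension `2 * k + 1`: the radial wave with the profile of that wave, in the outgoing null
direction `(1, -x / ‖x‖)`. -/
def radiationGradient (k : ℕ) (u : E → ℝ) (t : ℝ) (x : E) : WithLp 2 (ℝ × E) :=
  radiationField k (radiationProfile k u) t x • WithLp.toLp 2 (1, -(unitDirection x : E))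

theorem norm_sq_radiationGradient (x : E) :
    ‖radiationGradient k u t x‖ ^ 2 = 2 * radiationField k (radiationProfile k u) t x ^ 2 := by
  have hdir : ‖WithLp.toLp 2 ((1 : ℝ), -(unitDirection x : E))‖ ^ 2 = 2 := by
    rw [WithLp.prod_norm_sq_eq_of_L2]
    norm_num [norm_eq_of_mem_sphere]
  rw [radiationGradient, norm_smul, mul_pow, hdir, Real.norm_eq_abs, sq_abs, mul_comm]

theorem memLp_radiationGradient (hu : ContDiff ℝ (⊤ : ℕ∞) u) (huc : HasCompactSupport u)
    (hur : ∀ x, r < ‖x‖ → u x = 0) (hrt : r < t) :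
    MemLp (radiationGradient k u t) 2 volume := by
  have hfield := measurable_radiationField (k := k) (t := t)
    (continuous_radiationProfile (k := k) hu huc)
  have hdir : Measurable fun x : E ↦ WithLp.toLp 2 ((1 : ℝ), -(unitDirection x : E)) :=
    (WithLp.measurable_toLp 2 _).comp (measurable_const.prodMk
      (measurable_subtype_coe.comp measurable_unitDirection).neg)
  have hmeas : AEStronglyMeasurable (radiationGradient k u t) volume :=
    (hfield.smul hdir).aestronglyMeasurable
  refine (memLp_two_iff_integrable_sq_norm hmeas).2 ?_
  simp only [norm_sq_radiationGradient]
  exact (integrable_radiationField_sq (continuous_radiationProfile hu huc)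
    (radiationProfile_eq_zero hur) hrt).const_mul 2

theorem integral_norm_sq_radiationGradient (hE : finrank ℝ E = 2 * k + 1)
    (hu : ContDiff ℝ (⊤ : ℕ∞) u) (huc : HasCompactSupport u) (hur : ∀ x, r < ‖x‖ → u x = 0)
    (hrt : r < t) : ∫ x, ‖radiationGradient k u t x‖ ^ 2 = ∫ x, ‖gradient u x‖ ^ 2 := by
  have hfield := setIntegral_radiationField_sq (μ := volume) hE
    (continuous_radiationProfile (k := k) hu huc) (radiationProfile_eq_zero hur) hrt
    MeasurableSet.univ
  simp only [mem_univ, ofPred_true, setIntegral_univ] at hfield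
  simp only [norm_sq_radiationGradient, integral_const_mul]
  rw [hfield, integral_radiationProfile_sq hE hu huc]
  ring

theorem setIntegral_norm_sq_radiationGradient (hE : finrank ℝ E = 2 * k + 1)
    (hu : ContDiff ℝ (⊤ : ℕ∞) u) (huc : HasCompactSupport u) (hur : ∀ x, r < ‖x‖ → u x = 0)
    (hrt : r < t) : ∫ x in {x | t ≤ ‖x‖}, ‖radiationGradient k u t x‖ ^ 2 =
      (1 / 2) * ∫ x, ‖gradient u x‖ ^ 2 := by
  have hD := continuous_radiationProfile (k := k) hu huc
  have hfield := setIntegral_radiationField_sq (μ := volume) hE hD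
    (radiationProfile_eq_zero hur) hrt (measurableSet_Ici (a := (0 : ℝ)))
  simp only [mem_Ici, sub_nonneg] at hfield
  simp only [norm_sq_radiationGradient, integral_const_mul]
  rw [hfield, integral_toSphere_Ici_eq_half (D := fun ω s ↦ radiationProfile k u ω s ^ 2)
    (by simpa only [Function.uncurry_def, Pi.pow_def] using hD.pow 2)
    (fun ω s hs ↦ by rw [radiationProfile_eq_zero hur ω s hs, zero_pow two_ne_zero])
    radiationProfile_neg_neg_sq, integral_radiationProfile_sq hE hu huc]
  ring

variable {w : ℝ × E → ℝ}

theorem IsWaveSolution.inner_spacetimeGradient_radiationGradient (hE : finrank ℝ E = 2 * k + 1)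
    (hw : IsWaveSolution w) (hu : ContDiff ℝ (⊤ : ℕ∞) u) (huc : HasCompactSupport u)
    (hpos : ∀ x, w (0, x) = u x) (hvel : ∀ x, fderiv ℝ w (0, x) (1, 0) = 0) (ht : 0 ≤ t) (x : E) :
    ⟪spacetimeGradient w (t, x), radiationGradient k u t x⟫ =
      radiationField k (radiationProfile k u) t x *
        planeWave (fun ω s ↦ radonDensity k (2 * k + 1) u ω s *
          planeWavePhase (ω : E) (1, -(unitDirection x : E))) (t, x) := by
  rw [radiationGradient, real_inner_smul_right, inner_spacetimeGradient,
    hw.fderiv_eq_planeWave hE hu huc hpos hvel ht]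

theorem IsWaveSolution.tendsto_integral_inner_radiationGradient (hE : finrank ℝ E = 2 * k + 1)
    (hw : IsWaveSolution w) (hu : ContDiff ℝ (⊤ : ℕ∞) u) (huc : HasCompactSupport u)
    (hur : ∀ x, r < ‖x‖ → u x = 0) (hpos : ∀ x, w (0, x) = u x)
    (hvel : ∀ x, fderiv ℝ w (0, x) (1, 0) = 0) :
    Tendsto (fun t ↦ ∫ x, ⟪spacetimeGradient w (t, x), radiationGradient k u t x⟫) atTop
      (𝓝 (∫ x, ‖gradient u x‖ ^ 2)) := by
  have hlim := tendsto_integral_radiationField_mul_planeWave hE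
    (continuous_radiationProfile (k := k) hu huc) (radiationProfile_eq_zero hur)
    (continuous_radonDensity (k := k) hu huc (2 * k + 1)) (radonDensity_eq_zero hur _)
  rw [integral_radiationProfile_mul_radonDensity hE hu huc, ← mul_assoc, neg_mul_neg,
    mul_one_div_cancel two_ne_zero, one_mul] at hlim
  refine hlim.congr' ?_
  filter_upwards [eventually_ge_atTop 0] with t ht
  simp only [hw.inner_spacetimeGradient_radiationGradient hE hu huc hpos hvel ht]

theorem IsWaveSolution.tendsto_setIntegral_norm_sq_spacetimeGradient
    (hE : finrank ℝ E = 2 * k + 1) (hw : IsWaveSolution w) (hu : ContDiff ℝ (⊤ : ℕ∞) u)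
    (huc : HasCompactSupport u) (hpos : ∀ x, w (0, x) = u x)
    (hvel : ∀ x, fderiv ℝ w (0, x) (1, 0) = 0) :
    Tendsto (fun t ↦ ∫ x in {x | t ≤ ‖x‖}, ‖spacetimeGradient w (t, x)‖ ^ 2) atTop
      (𝓝 ((1 / 2) * ∫ x, ‖gradient u x‖ ^ 2)) := by
  obtain ⟨r, -, hr⟩ := huc.exists_pos_le_norm
  have hur (x : E) (hx : r < ‖x‖) : u x = 0 := hr x hx.le
  have hw₁ := hw.contDiff.of_le one_le_two
  have henergy₀ := norm_sq_spacetimeGradient_zero hw₁ hpos hvel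
  have hint₀ : Integrable fun x ↦ ‖spacetimeGradient w (0, x)‖ ^ 2 := by
    simpa only [henergy₀] using integrable_norm_sq_gradient (hu.of_le (by simp)) huc
  have hLp (t : ℝ) (ht : 0 ≤ t) : MemLp (fun x ↦ spacetimeGradient w (t, x)) 2 volume :=
    (memLp_two_iff_integrable_sq_norm ((continuous_spacetimeGradient hw₁).comp
      (Continuous.prodMk_right t)).aestronglyMeasurable).2
      (hw.integrable_norm_sq_spacetimeGradient hint₀ ht)
  have henergy (t : ℝ) (ht : 0 ≤ t) :
      ∫ x, ‖spacetimeGradient w (t, x)‖ ^ 2 ≤ ∫ x, ‖gradient u x‖ ^ 2 := by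
    simpa only [henergy₀] using hw.integral_norm_sq_spacetimeGradient_le hint₀ ht
  have hLp_lim := (eventually_ge_atTop 0).mono hLp
  have hLp_rad := (eventually_gt_atTop r).mono fun t ht ↦
    memLp_radiationGradient (k := k) hu huc hur ht
  refine tendsto_setIntegral_norm_sq_of_tendsto_integral_norm_sub_sq hLp_lim hLp_rad
    (tendsto_integral_norm_sub_sq_of_tendsto_integral_inner hLp_lim hLp_rad
      ((eventually_ge_atTop 0).mono henergy)
      ((eventually_gt_atTop r).mono fun t ht ↦
        (integral_norm_sq_radiationGradient hE hu huc hur ht).le)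
      (hw.tendsto_integral_inner_radiationGradient hE hu huc hur hpos hvel)) ?_
  refine tendsto_const_nhds.congr' ?_
  filter_upwards [eventually_gt_atTop r] with t ht
  exact (setIntegral_norm_sq_radiationGradient hE hu huc hur ht).symm

end RadiationGradient

section ExteriorEnergy

variable {E : Type*} [NormedAddCommGroup E] [InnerProductSpace ℝ E] [FiniteDimensional ℝ E]
  [MeasurableSpace E] [BorelSpace E] {u₀ : E → ℝ} {u : ℝ → E → ℝ}

/-- The energy of `u` at time `t` in the exterior of the light cone. -/
def exteriorEnergy (u : ℝ → E → ℝ) (t : ℝ) : ℝ :=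
  (1 / 2) * ∫ x in {x : E | |t| ≤ ‖x‖}, (‖gradient (u t) x‖ ^ 2 + deriv (fun s ↦ u s x) t ^ 2)

theorem deriv_deriv_comp_neg (f : ℝ → ℝ) (t : ℝ) :
    deriv (fun s ↦ deriv (fun r ↦ f (-r)) s) t = deriv (fun s ↦ deriv f s) (-t) := by
  simp only [deriv_comp_neg, deriv.fun_neg, neg_neg]

theorem exteriorEnergy_comp_neg (u : ℝ → E → ℝ) (t : ℝ) :
    exteriorEnergy (fun s ↦ u (-s)) t = exteriorEnergy u (-t) := by
  have hderiv (x : E) : deriv (fun s ↦ u (-s) x) t = -deriv (fun s ↦ u s x) (-t) :=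
    deriv_comp_neg (fun s ↦ u s x) t
  simp only [exteriorEnergy, abs_neg, hderiv, neg_sq]

theorem tendsto_exteriorEnergy_atTop (hE : Odd (finrank ℝ E))
    (hu₀ : ContDiff ℝ (⊤ : ℕ∞) u₀) (hu₀c : HasCompactSupport u₀)
    (hu : ContDiff ℝ 2 fun p : ℝ × E ↦ u p.1 p.2)
    (hwave : ∀ t x, deriv (fun s ↦ deriv (fun r ↦ u r x) s) t = Δ (u t) x)
    (hinit0 : ∀ x, u 0 x = u₀ x) (hinit1 : ∀ x, deriv (fun s ↦ u s x) 0 = 0) :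
    Tendsto (exteriorEnergy u) atTop (𝓝 ((1 / 4) * ∫ x, ‖gradient u₀ x‖ ^ 2)) := by
  obtain ⟨k, hk⟩ := hE
  have : Nontrivial E := nontrivial_of_finrank_pos (R := ℝ) (hk ▸ Nat.succ_pos _)
  have hu₁ := hu.of_le one_le_two
  have hw : IsWaveSolution fun p : ℝ × E ↦ u p.1 p.2 := .of_deriv_deriv_eq_laplacian hu hwave
  have hvel (x : E) : fderiv ℝ (fun p : ℝ × E ↦ u p.1 p.2) (0, x) (1, 0) = 0 := by
    rw [← deriv_comp_prodMk_left hu₁, hinit1]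
  have hlim := (hw.tendsto_setIntegral_norm_sq_spacetimeGradient hk hu₀ hu₀c hinit0
    hvel).const_mul (1 / 2)
  simp only [norm_sq_spacetimeGradient_eq_norm_sq_gradient_add hu₁] at hlim
  rw [← mul_assoc, show (1 / 2 : ℝ) * (1 / 2) = 1 / 4 by norm_num] at hlim
  refine hlim.congr' ?_
  filter_upwards [eventually_ge_atTop 0] with t ht
  rw [exteriorEnergy, abs_of_nonneg ht]

theorem stmt12_general (hE : Odd (finrank ℝ E))
    (hu₀ : ContDiff ℝ (⊤ : ℕ∞) u₀) (hu₀c : HasCompactSupport u₀)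
    (hu : ContDiff ℝ 2 fun p : ℝ × E ↦ u p.1 p.2)
    (hwave : ∀ t x, deriv (fun s ↦ deriv (fun r ↦ u r x) s) t = Δ (u t) x)
    (hinit0 : ∀ x, u 0 x = u₀ x) (hinit1 : ∀ x, deriv (fun s ↦ u s x) 0 = 0) :
    Tendsto (exteriorEnergy u) atTop (𝓝 ((1 / 4) * ∫ x, ‖gradient u₀ x‖ ^ 2)) ∧
      Tendsto (exteriorEnergy u) atBot (𝓝 ((1 / 4) * ∫ x, ‖gradient u₀ x‖ ^ 2)) := by
  refine ⟨tendsto_exteriorEnergy_atTop hE hu₀ hu₀c hu hwave hinit0 hinit1, ?_⟩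
  have hreversed : Tendsto (exteriorEnergy fun t ↦ u (-t)) atTop
      (𝓝 ((1 / 4) * ∫ x, ‖gradient u₀ x‖ ^ 2)) := by
    refine tendsto_exteriorEnergy_atTop hE hu₀ hu₀c
      (hu.comp (contDiff_fst.neg.prodMk contDiff_snd)) (fun t x ↦ ?_)
      (by simpa using hinit0) (fun x ↦ ?_)
    · rw [deriv_deriv_comp_neg fun s ↦ u s x, hwave]
    · rw [deriv_comp_neg fun s ↦ u s x, neg_zero, hinit1, neg_zero]
  refine (hreversed.comp tendsto_neg_atBot_atTop).congr fun t ↦ ?_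
  rw [Function.comp_apply, exteriorEnergy_comp_neg, neg_neg]

end ExteriorEnergy

theorem sum_d2_eq_laplacian {N : ℕ} {f : EuclideanSpace ℝ (Fin N) → ℝ} (hf : ContDiff ℝ 2 f)
    (x : EuclideanSpace ℝ (Fin N)) : ∑ j, d2 f j x = Δ f x := by
  simp [laplacian_eq_sum_fderiv_fderiv (EuclideanSpace.basisFun (Fin N) ℝ) hf, d2]

/-- Lemma 2.8, first identity: for data `(u₀, 0)` supported in the unit ball, the
exterior energy converges to one quarter of `∫|∇u₀|²` at `±∞`. -/
theorem stmt12 (N : ℕ) (hN : 3 ≤ N) (hodd : Odd N)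
    (u₀ : EuclideanSpace ℝ (Fin N) → ℝ)
    (hu₀ : ContDiff ℝ (⊤ : ℕ∞) u₀) (hu₀c : HasCompactSupport u₀)
    (hu₀s : Function.support u₀ ⊆ Metric.closedBall 0 1)
    (u : ℝ → EuclideanSpace ℝ (Fin N) → ℝ)
    (hu : ContDiff ℝ (⊤ : ℕ∞) (fun p : ℝ × EuclideanSpace ℝ (Fin N) => u p.1 p.2))
    (hwave : ∀ t x, deriv (fun s => deriv (fun r => u r x) s) t = ∑ j, d2 (u t) j x)
    (hinit0 : ∀ x, u 0 x = u₀ x)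
    (hinit1 : ∀ x, deriv (fun s => u s x) 0 = 0) :
    Tendsto (fun t : ℝ =>
        (1 / 2) * ∫ x in {x : EuclideanSpace ℝ (Fin N) | |t| ≤ ‖x‖},
          (‖gradient (u t) x‖ ^ 2 + (deriv (fun s => u s x) t) ^ 2))
      atTop (nhds ((1 / 4) * ∫ x, ‖gradient u₀ x‖ ^ 2))
    ∧ Tendsto (fun t : ℝ =>
        (1 / 2) * ∫ x in {x : EuclideanSpace ℝ (Fin N) | |t| ≤ ‖x‖},
          (‖gradient (u t) x‖ ^ 2 + (deriv (fun s => u s x) t) ^ 2))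
      atBot (nhds ((1 / 4) * ∫ x, ‖gradient u₀ x‖ ^ 2)) := by
  have hu₂ := contDiff_infty.1 hu 2
  exact stmt12_general (by rwa [finrank_euclideanSpace_fin]) hu₀ hu₀c hu₂
    (fun t x ↦ (hwave t x).trans (sum_d2_eq_laplacian (hu₂.comp (contDiff_prodMk_right t)) x))
    hinit0 hinit1

end
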